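/- Let n ≥ 1 and n/(n+1) < p ≤ 1, and fix ψ as in the context. There is a constant C = C(n,p,ψ) ≥ 1 such that for every locally integrable f : ℝⁿ → ℝ the following are equivalent: (i) there exist g ∈ L^p(ℝⁿ), g ≥ 0 measurable, and a set E of Lebesgue measure zero such that |f(x) − f(y)| ≤ |x − y|·(g(x) + g(y)) for all x, y ∈ ℝⁿ ∖ E with |x − y| ≤ 1; (ii) for each j ∈ {1,…,n} the truncated maximal function m_ψ(D_j f)(x) := sup_{0<t≤1} t^{−n−1} |∫_{ℝⁿ} f(y)(∂_jψ)((x−y)/t) dy| belongs to L^p(ℝⁿ). Moreover C^{−1}·Σ_j ‖m_ψ(D_j f)‖_{L^p} ≤ inf{‖g‖_{L^p} : g as in (i)} ≤ C·Σ_j ‖m_ψ(D_j f)‖_{L^p}. -/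

import Mathlib

open MeasureTheory Metric Set ENNReal NNReal

noncomputable section

/-- The `L^p` quasinorm (for a positive real exponent `p`) of a real function
with respect to the measure `μ`. -/
def lpNorm (n : ℕ) (p : ℝ) (g : EuclideanSpace ℝ (Fin n) → ℝ)
    (μ : Measure (EuclideanSpace ℝ (Fin n))) : ℝ≥0∞ :=
  (∫⁻ x, ENNReal.ofReal |g x| ^ p ∂μ) ^ (1 / p)

/-- `g` is a local Hajlasz gradient of `u` on `ℝⁿ`: the Hajlasz inequality holds off a
null set for all pairs of points at distance at most `1`. -/
def IsLocalHajlaszGradient (n : ℕ) (u g : EuclideanSpace ℝ (Fin n) → ℝ) : Prop :=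
  Measurable g ∧ (∀ x, 0 ≤ g x) ∧
    ∃ E : Set (EuclideanSpace ℝ (Fin n)), MeasureTheory.volume E = 0 ∧
      ∀ x ∉ E, ∀ y ∉ E, ‖x - y‖ ≤ 1 → |u x - u y| ≤ ‖x - y‖ * (g x + g y)

/-- The truncated smooth maximal function of `D_j f`:
`m_ψ(D_j f)(x) = sup_{0 < t ≤ 1} t^{-n-1} |∫ f(y) (∂_j ψ)((x-y)/t) dy|`. -/
def truncSmoothMax (n : ℕ) (ψ f : EuclideanSpace ℝ (Fin n) → ℝ) (j : Fin n)
    (x : EuclideanSpace ℝ (Fin n)) : ℝ≥0∞ :=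
  ⨆ (t : {s : ℝ // 0 < s ∧ s ≤ 1}),
    ENNReal.ofReal ((t.1⁻¹) ^ (n + 1) *
      |∫ y, f y * fderiv ℝ ψ (t.1⁻¹ • (x - y)) (EuclideanSpace.single j 1)|)

/-
Both directions pass through an exponent `q` with `n / (n + 1) < q < min p 1` and the operator
`h ↦ (M (h ^ q)) ^ (1 / q)`, where `M` is the Hardy–Littlewood maximal function; it is bounded on
`L^p` because `p / q > 1`.

(i) ⇒ (ii). On a ball of radius `t` a function with Hajłasz gradient `g` satisfies a
Sobolev–Poincaré inequality: some constant approximates `f` in `L¹` average up to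
`C t (M (g ^ q)) ^ (1 / q)`. As `∂_j ψ_t` has integral zero, that constant may be subtracted from
`f`, and so `m_ψ(D_j f) ≤ C (M (g ^ q)) ^ (1 / q)` pointwise.

(ii) ⇒ (i). Let `v_k` be `D_j f` mollified at scale `2⁻ᵏ`. Since mollifications commute, `v_k` is a
telescoping sum over finer scales `i`, whose terms gain a factor `2⁻ⁱ` from the smoothness of `ψ_k`.
Interpolating `|v_i| = |v_i|^(1 - q) |v_i|^q`, the suitably scaled supremum `S` of the `|v_k|`
satisfies `S ≤ X S^(1 - q)`, hence `S^q ≤ X`; this bounds `v_k`, even at distance `4 · 2⁻ᵏ` from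
`x`, by `C (M (m_ψ(D_j f) ^ q)) ^ (1 / q)` at `x`. To bound `f x - f y`, pass from `f x` to its
mollification at the scale `‖x - y‖`, from there to the mollification at `y`, and back to `f y`.
-/

section MaximalFunction

variable {X : Type*} [PseudoMetricSpace X] [MeasurableSpace X]

/-- The uncentred Hardy–Littlewood maximal function: the supremum of the averages of `h` over all
open balls containing `x`. -/
def hardyLittlewoodMax (μ : Measure X) (h : X → ℝ≥0∞) (x : X) : ℝ≥0∞ :=
  ⨆ (c : X) (R : ℝ) (_ : x ∈ ball c R), (μ (ball c R))⁻¹ * ∫⁻ y in ball c R, h y ∂μ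

lemma lt_hardyLittlewoodMax_iff {μ : Measure X} {h : X → ℝ≥0∞} {x : X} {l : ℝ≥0∞} :
    l < hardyLittlewoodMax μ h x ↔
      ∃ c R, x ∈ ball c R ∧ l < (μ (ball c R))⁻¹ * ∫⁻ y in ball c R, h y ∂μ := by
  simp only [hardyLittlewoodMax, lt_iSup_iff, exists_prop]

lemma ball_average_le_hardyLittlewoodMax (μ : Measure X) (h : X → ℝ≥0∞) {x c : X} {R : ℝ}
    (hx : x ∈ ball c R) :
    (μ (ball c R))⁻¹ * ∫⁻ y in ball c R, h y ∂μ ≤ hardyLittlewoodMax μ h x :=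
  le_iSup_of_le c (le_iSup_of_le R (le_iSup_of_le hx le_rfl))

lemma isOpen_lt_hardyLittlewoodMax (μ : Measure X) (h : X → ℝ≥0∞) (l : ℝ≥0∞) :
    IsOpen {x | l < hardyLittlewoodMax μ h x} := by
  refine isOpen_iff_mem_nhds.2 fun x hx => ?_
  obtain ⟨c, R, hxc, hlt⟩ := lt_hardyLittlewoodMax_iff.1 hx
  exact Filter.mem_of_superset (isOpen_ball.mem_nhds hxc)
    fun y hy => lt_hardyLittlewoodMax_iff.2 ⟨c, R, hy, hlt⟩

lemma measurable_hardyLittlewoodMax [OpensMeasurableSpace X] (μ : Measure X) (h : X → ℝ≥0∞) :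
    Measurable (hardyLittlewoodMax μ h) :=
  measurable_of_Ioi fun l => (isOpen_lt_hardyLittlewoodMax μ h l).measurableSet

variable [ProperSpace X] {μ : Measure X} [μ.IsOpenPosMeasure] [IsFiniteMeasureOnCompacts μ]

lemma setLIntegral_ball_le_mul_hardyLittlewoodMax (h : X → ℝ≥0∞) {x c : X} {R : ℝ}
    (hx : x ∈ ball c R) :
    ∫⁻ y in ball c R, h y ∂μ ≤ μ (ball c R) * hardyLittlewoodMax μ h x := by
  rw [← ENNReal.inv_mul_le_iff (measure_ball_pos μ c (pos_of_mem_ball hx)).ne'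
    measure_ball_lt_top.ne]
  exact ball_average_le_hardyLittlewoodMax μ h hx

lemma hardyLittlewoodMax_le_add_indicator (h : X → ℝ≥0∞) (l : ℝ≥0∞) (x : X) :
    hardyLittlewoodMax μ h x ≤ l + hardyLittlewoodMax μ ({y | l < h y}.indicator h) x := by
  refine iSup_le fun c => iSup_le fun R => iSup_le fun hx => ?_
  have hne : μ (ball c R) ≠ 0 := (measure_ball_pos μ c (pos_of_mem_ball hx)).ne'
  have h_le (y : X) : h y ≤ l + {y | l < h y}.indicator h y := by
    by_cases hy : l < h y
    · rw [indicator_of_mem (by exact hy)]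
      exact le_add_self
    · exact (not_lt.1 hy).trans le_self_add
  calc (μ (ball c R))⁻¹ * ∫⁻ y in ball c R, h y ∂μ
      ≤ (μ (ball c R))⁻¹ * ∫⁻ y in ball c R, (l + {y | l < h y}.indicator h y) ∂μ := by
        gcongr with y
        exact h_le y
    _ = l + (μ (ball c R))⁻¹ * ∫⁻ y in ball c R, {y | l < h y}.indicator h y ∂μ := by
        rw [lintegral_add_left measurable_const, setLIntegral_const, mul_add, mul_comm l,
          ← mul_assoc, ENNReal.inv_mul_cancel hne measure_ball_lt_top.ne, one_mul]
    _ ≤ _ := by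
        gcongr
        exact ball_average_le_hardyLittlewoodMax μ _ hx

end MaximalFunction

section LayerCake

lemma lintegral_Ioi_zero_ofReal_rpow_eq_top (a : ℝ) :
    ∫⁻ t in Ioi (0 : ℝ), ENNReal.ofReal (t ^ a) = ⊤ := by
  by_contra h
  refine not_integrableOn_Ioi_rpow a ⟨by fun_prop, ?_⟩
  rw [hasFiniteIntegral_iff_ofReal]
  · exact lt_top_iff_ne_top.2 h
  · filter_upwards [ae_restrict_mem measurableSet_Ioi] with t ht using Real.rpow_nonneg ht.le a

lemma lintegral_rpow_eq_lintegral_measure_ofReal_lt {α : Type*} [MeasurableSpace α]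
    (ν : Measure α) {N : α → ℝ≥0∞} (hN : AEMeasurable N ν) {a : ℝ} (ha : 0 < a) :
    ∫⁻ x, N x ^ a ∂ν = ENNReal.ofReal a *
      ∫⁻ t in Ioi (0 : ℝ), ν {x | ENNReal.ofReal t < N x} * ENNReal.ofReal (t ^ (a - 1)) := by
  by_cases hfin : ∀ᵐ x ∂ν, N x ≠ ⊤
  · have h_rpow : ∫⁻ x, N x ^ a ∂ν = ∫⁻ x, ENNReal.ofReal ((N x).toReal ^ a) ∂ν := by
      refine lintegral_congr_ae (hfin.mono fun x hx => ?_)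
      dsimp only
      rw [← ENNReal.ofReal_rpow_of_nonneg ENNReal.toReal_nonneg ha.le, ENNReal.ofReal_toReal hx]
    rw [h_rpow, lintegral_rpow_eq_lintegral_meas_lt_mul ν
      (.of_forall fun x => ENNReal.toReal_nonneg) hN.ennreal_toReal ha]
    congr 1
    refine setLIntegral_congr_fun measurableSet_Ioi fun t ht => ?_
    congr 1
    refine measure_congr (hfin.mono fun x hx => ?_)
    exact propext (ENNReal.ofReal_lt_iff_lt_toReal ht.le hx).symm
  · have h_pos : ν {x | N x = ⊤} ≠ 0 := by simpa [ae_iff] using hfin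
    have h_left : ∫⁻ x, N x ^ a ∂ν = ⊤ := by
      refine lintegral_eq_top_of_measure_eq_top_ne_zero (hN.pow_const a) ?_
      simpa only [ENNReal.rpow_eq_top_iff_of_pos ha] using h_pos
    have h_right : ν {x | N x = ⊤} * ∫⁻ t in Ioi (0 : ℝ), ENNReal.ofReal (t ^ (a - 1)) ≤
        ∫⁻ t in Ioi (0 : ℝ), ν {x | ENNReal.ofReal t < N x} * ENNReal.ofReal (t ^ (a - 1)) := by
      rw [← lintegral_const_mul _ (by fun_prop)]
      gcongr with t
      exact fun hx => hx ▸ ENNReal.ofReal_lt_top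
    rw [lintegral_Ioi_zero_ofReal_rpow_eq_top, ENNReal.mul_top h_pos, top_le_iff] at h_right
    rw [h_left, h_right, ENNReal.mul_top (by simpa using ha)]

end LayerCake

section MaximalInequality

variable {E : Type*} [NormedAddCommGroup E] [NormedSpace ℝ E] [FiniteDimensional ℝ E]
  [MeasurableSpace E] [BorelSpace E] (μ : Measure E) [μ.IsAddHaarMeasure]

open Module (finrank)

lemma addHaar_closedBall_five_mul (c : E) {R : ℝ} (hR : 0 < R) :
    μ (closedBall c (5 * R)) = 5 ^ finrank ℝ E * μ (ball c R) := by
  rw [Measure.addHaar_closedBall μ c (by positivity), Measure.addHaar_ball_of_pos μ c hR,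
    mul_pow, ENNReal.ofReal_mul (by positivity), ENNReal.ofReal_pow (by norm_num),
    ENNReal.ofReal_ofNat, mul_assoc]

lemma mul_measure_le_of_subset_biUnion_ball {h : E → ℝ≥0∞} {l : ℝ≥0∞} {K : Set E}
    {t : Set (E × ℝ)} (ht : t.Finite) (hK : K ⊆ ⋃ a ∈ t, ball a.1 a.2)
    (hpos : ∀ a ∈ t, 0 < a.2)
    (hl : ∀ a ∈ t, l * μ (ball a.1 a.2) ≤ ∫⁻ y in ball a.1 a.2, h y ∂μ) :
    l * μ K ≤ 5 ^ finrank ℝ E * ∫⁻ y, h y ∂μ := by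
  obtain ⟨R₀, hR₀⟩ := (ht.image Prod.snd).bddAbove
  obtain ⟨u, hut, hdisj, hcov⟩ := Vitali.exists_disjoint_subfamily_covering_enlargement_closedBall
    t (fun a => a.1) (fun a => a.2) R₀ (fun a ha => hR₀ ⟨a, ha, rfl⟩) 5 (by norm_num)
  have hcount : u.Countable := (ht.subset hut).countable
  have hdisj_ball : u.PairwiseDisjoint fun a => ball a.1 a.2 :=
    hdisj.mono_on fun a _ => ball_subset_closedBall
  have hsub : K ⊆ ⋃ b ∈ u, closedBall b.1 (5 * b.2) := fun x hx => by
    obtain ⟨a, hat, hxa⟩ := mem_iUnion₂.1 (hK hx)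
    obtain ⟨b, hbu, hab⟩ := hcov a hat
    exact mem_biUnion hbu (hab (ball_subset_closedBall hxa))
  calc l * μ K ≤ l * ∑' b : u, μ (closedBall b.1.1 (5 * b.1.2)) := by
        gcongr
        exact (measure_mono hsub).trans (measure_biUnion_le _ hcount _)
    _ = ∑' b : u, 5 ^ finrank ℝ E * (l * μ (ball b.1.1 b.1.2)) := by
        rw [← ENNReal.tsum_mul_left]
        congr 1 with b
        rw [addHaar_closedBall_five_mul μ _ (hpos _ (hut b.2)), mul_left_comm]
    _ ≤ ∑' b : u, 5 ^ finrank ℝ E * ∫⁻ y in ball b.1.1 b.1.2, h y ∂μ := by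
        gcongr with b
        exact hl _ (hut b.2)
    _ = 5 ^ finrank ℝ E * ∫⁻ y in ⋃ b ∈ u, ball b.1 b.2, h y ∂μ := by
        rw [ENNReal.tsum_mul_left, lintegral_biUnion hcount (fun b _ => measurableSet_ball)
          hdisj_ball]
    _ ≤ _ := by
        gcongr
        exact Measure.restrict_le_self

lemma mul_measure_lt_hardyLittlewoodMax_le (h : E → ℝ≥0∞) (l : ℝ≥0∞) :
    l * μ {x | l < hardyLittlewoodMax μ h x} ≤ 5 ^ finrank ℝ E * ∫⁻ y, h y ∂μ := by
  rw [(isOpen_lt_hardyLittlewoodMax μ h l).measure_eq_iSup_isCompact]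
  simp only [ENNReal.mul_iSup, iSup_le_iff]
  intro K hKsub hK
  let good : Set (E × ℝ) :=
    {a | 0 < a.2 ∧ l * μ (ball a.1 a.2) ≤ ∫⁻ y in ball a.1 a.2, h y ∂μ}
  have hcov : K ⊆ ⋃ a ∈ good, ball a.1 a.2 := fun x hx => by
    obtain ⟨c, R, hxc, hlt⟩ := lt_hardyLittlewoodMax_iff.1 (hKsub hx)
    have hR : 0 < R := pos_of_mem_ball hxc
    refine mem_biUnion (show (c, R) ∈ good from ⟨hR, ?_⟩) hxc
    rw [← ENNReal.le_div_iff_mul_le (.inl (measure_ball_pos μ c hR).ne')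
      (.inl measure_ball_lt_top.ne), ENNReal.div_eq_inv_mul]
    exact hlt.le
  obtain ⟨t, htgood, htfin, htcov⟩ :=
    hK.elim_finite_subcover_image (fun a _ => isOpen_ball) hcov
  exact mul_measure_le_of_subset_biUnion_ball μ htfin htcov (fun a ha => (htgood ha).1)
    fun a ha => (htgood ha).2

lemma mul_measure_two_mul_lt_hardyLittlewoodMax_le {h : E → ℝ≥0∞} (hh : Measurable h) {l : ℝ≥0∞}
    (hl : l ≠ ⊤) :
    l * μ {x | 2 * l < hardyLittlewoodMax μ h x} ≤
      5 ^ finrank ℝ E * μ.withDensity h {x | l < h x} := by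
  have hsub : {x | 2 * l < hardyLittlewoodMax μ h x} ⊆
      {x | l < hardyLittlewoodMax μ ({y | l < h y}.indicator h) x} := fun x hx => by
    have := (mem_ofPred.1 hx).trans_le (hardyLittlewoodMax_le_add_indicator h l x)
    rw [two_mul] at this
    exact (ENNReal.add_lt_add_iff_left hl).1 this
  have hmeas : MeasurableSet {x | l < h x} := measurableSet_lt measurable_const hh
  calc l * μ {x | 2 * l < hardyLittlewoodMax μ h x}
      ≤ l * μ {x | l < hardyLittlewoodMax μ ({y | l < h y}.indicator h) x} := by gcongr
    _ ≤ 5 ^ finrank ℝ E * ∫⁻ y, {y | l < h y}.indicator h y ∂μ :=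
        mul_measure_lt_hardyLittlewoodMax_le μ _ l
    _ = _ := by rw [lintegral_indicator hmeas, withDensity_apply h hmeas]

lemma measure_lt_half_hardyLittlewoodMax_mul_rpow_le (s : ℝ) {h : E → ℝ≥0∞} (hh : Measurable h)
    {t : ℝ} (ht : 0 < t) :
    μ {x | ENNReal.ofReal t < hardyLittlewoodMax μ h x / 2} * ENNReal.ofReal (t ^ s) ≤
      5 ^ finrank ℝ E *
        (μ.withDensity h {x | ENNReal.ofReal t < h x} * ENNReal.ofReal (t ^ (s - 1))) := by
  have h_half : {x | ENNReal.ofReal t < hardyLittlewoodMax μ h x / 2} =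
      {x | 2 * ENNReal.ofReal t < hardyLittlewoodMax μ h x} := by
    ext x
    simp only [mem_ofPred_eq, mul_comm (2 : ℝ≥0∞),
      ENNReal.lt_div_iff_mul_lt (.inl two_ne_zero) (.inl ofNat_ne_top)]
  have h_split : ENNReal.ofReal (t ^ s) = ENNReal.ofReal t * ENNReal.ofReal (t ^ (s - 1)) := by
    rw [← ENNReal.ofReal_mul ht.le, Real.rpow_sub_one ht.ne', mul_div_cancel₀ _ ht.ne']
  rw [h_half, h_split, ← mul_assoc, ← mul_assoc, mul_comm (μ _)]
  gcongr ?_ * _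
  exact mul_measure_two_mul_lt_hardyLittlewoodMax_le μ hh ofReal_ne_top

lemma lintegral_half_hardyLittlewoodMax_rpow_le {s : ℝ} (hs : 1 < s) {h : E → ℝ≥0∞}
    (hh : Measurable h) :
    ∫⁻ x, (hardyLittlewoodMax μ h x / 2) ^ s ∂μ ≤
      ENNReal.ofReal s * (ENNReal.ofReal (s - 1))⁻¹ * 5 ^ finrank ℝ E * ∫⁻ x, h x ^ s ∂μ := by
  have hs₁ : 0 < s - 1 := sub_pos.2 hs
  have h_density : ∫⁻ x, h x ^ s ∂μ = ∫⁻ x, h x ^ (s - 1) ∂μ.withDensity h := by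
    rw [lintegral_withDensity_eq_lintegral_mul _ hh (hh.pow_const _)]
    congr 1 with x
    conv_lhs => rw [← add_sub_cancel 1 s, ENNReal.rpow_add_of_nonneg _ _ zero_le_one hs₁.le,
      ENNReal.rpow_one]
    rfl
  rw [h_density, lintegral_rpow_eq_lintegral_measure_ofReal_lt μ
      ((measurable_hardyLittlewoodMax μ h).div_const 2).aemeasurable (by linarith),
    lintegral_rpow_eq_lintegral_measure_ofReal_lt _ hh.aemeasurable hs₁, mul_assoc, mul_assoc,
    mul_left_comm (5 ^ _), ENNReal.inv_mul_cancel_left (by simpa using hs) ofReal_ne_top,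
    ← lintegral_const_mul' (5 ^ finrank ℝ E) _ (by simp)]
  gcongr _ * ?_
  exact setLIntegral_mono' measurableSet_Ioi fun t ht =>
    measure_lt_half_hardyLittlewoodMax_mul_rpow_le μ (s - 1) hh ht

lemma exists_lintegral_hardyLittlewoodMax_rpow_le {s : ℝ} (hs : 1 < s) :
    ∃ C : ℝ≥0∞, C ≠ ⊤ ∧ ∀ h : E → ℝ≥0∞, Measurable h →
      ∫⁻ x, hardyLittlewoodMax μ h x ^ s ∂μ ≤ C * ∫⁻ x, h x ^ s ∂μ := by
  have hs₀ : 0 ≤ s := by linarith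
  have h_two : (2 : ℝ≥0∞) ^ s ≠ ⊤ := ENNReal.rpow_ne_top_of_nonneg hs₀ ofNat_ne_top
  refine ⟨2 ^ s * (ENNReal.ofReal s * (ENNReal.ofReal (s - 1))⁻¹ * 5 ^ finrank ℝ E),
    ENNReal.mul_ne_top h_two ?_, fun h hh => ?_⟩
  · exact ENNReal.mul_ne_top (ENNReal.mul_ne_top ofReal_ne_top (by simpa using hs)) (by simp)
  calc ∫⁻ x, hardyLittlewoodMax μ h x ^ s ∂μ
      = 2 ^ s * ∫⁻ x, (hardyLittlewoodMax μ h x / 2) ^ s ∂μ := by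
        rw [← lintegral_const_mul' _ _ h_two]
        simp only [← ENNReal.mul_rpow_of_nonneg _ _ hs₀,
          ENNReal.mul_div_cancel two_ne_zero ofNat_ne_top]
    _ ≤ _ := by
        rw [mul_assoc (2 ^ s)]
        gcongr
        exact lintegral_half_hardyLittlewoodMax_rpow_le μ hs hh

lemma exists_lintegral_hardyLittlewoodMax_rpow_quasinorm_le {q p : ℝ} (hq : 0 < q) (hqp : q < p) :
    ∃ C : ℝ≥0∞, C ≠ ⊤ ∧ ∀ h : E → ℝ≥0∞, Measurable h →
      (∫⁻ x, (hardyLittlewoodMax μ (fun y => h y ^ q) x ^ (1 / q)) ^ p ∂μ) ^ (1 / p) ≤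
        C * (∫⁻ x, h x ^ p ∂μ) ^ (1 / p) := by
  have hp : 0 ≤ 1 / p := one_div_nonneg.2 (hq.trans hqp).le
  obtain ⟨C, hC, h_strong⟩ := exists_lintegral_hardyLittlewoodMax_rpow_le μ ((one_lt_div hq).2 hqp)
  refine ⟨C ^ (1 / p), ENNReal.rpow_ne_top_of_nonneg hp hC, fun h hh => ?_⟩
  have h_le := h_strong (fun y => h y ^ q) (hh.pow_const q)
  simp only [← ENNReal.rpow_mul, mul_div_cancel₀ _ hq.ne'] at h_le
  simp only [← ENNReal.rpow_mul, one_div_mul_eq_div, ← ENNReal.mul_rpow_of_nonneg _ _ hp]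
  gcongr

end MaximalInequality

section HajlaszPoincare

open Module (finrank)

variable {E : Type*} [NormedAddCommGroup E] [MeasurableSpace E]

/-- `g` is a Hajłasz gradient of `f` off the null set `Z`, and `A` bounds the `L^q` average of `g`
over the ball `ball x r` of radius at most `1`. This is the setting of the Sobolev–Poincaré
inequality `exists_abs_sub_le_of_hajlaszOnBall`. -/
structure HajlaszOnBall (μ : Measure E) (f g : E → ℝ) (Z : Set E) (q : ℝ) (x : E) (r A : ℝ) :
    Prop where
  null : μ Z = 0
  nonneg : ∀ y, 0 ≤ g y
  hajlasz_le : ∀ y ∉ Z, ∀ z ∉ Z, ‖y - z‖ ≤ 1 → |f y - f z| ≤ ‖y - z‖ * (g y + g z)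
  radius_pos : 0 < r
  radius_le_one : r ≤ 1
  average_pos : 0 < A
  lintegral_le :
    ∫⁻ y in ball x r, ENNReal.ofReal (g y) ^ q ∂μ ≤ μ (ball x r) * ENNReal.ofReal A ^ q

namespace HajlaszOnBall

variable {μ : Measure E} {f g : E → ℝ} {Z : Set E} {q r A : ℝ} {x : E}

lemma abs_sub_le_mul (h : HajlaszOnBall μ f g Z q x r A) {y z : E} {d a b : ℝ} (hy : y ∉ Z)
    (hz : z ∉ Z) (hd : ‖y - z‖ ≤ d) (hd₁ : d ≤ 1) (ha : g y ≤ a) (hb : g z ≤ b) :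
    |f y - f z| ≤ d * (a + b) :=
  (h.hajlasz_le y hy z hz (hd.trans hd₁)).trans <|
    mul_le_mul hd (add_le_add ha hb) (add_nonneg (h.nonneg y) (h.nonneg z))
      ((norm_nonneg _).trans hd)

variable [NormedSpace ℝ E] [FiniteDimensional ℝ E] [BorelSpace E] [μ.IsAddHaarMeasure]

-- Otherwise `g ^ q > (L * A) ^ q` almost everywhere on `ball c s`, which is too much mass.
lemma exists_mem_ball_le_mul (h : HajlaszOnBall μ f g Z q x r A) (hq : 0 < q) {c : E} {s L : ℝ}
    (hs : 0 < s) (hL : 0 < L) (hsub : ball c s ⊆ ball x r)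
    (hlt : r ^ finrank ℝ E < s ^ finrank ℝ E * L ^ q) :
    ∃ z ∈ ball c s, z ∉ Z ∧ g z ≤ L * A := by
  by_contra! hcon
  have hA := h.average_pos
  have h_mass : μ (ball x r) < ENNReal.ofReal L ^ q * μ (ball c s) := by
    rw [Measure.addHaar_ball_of_pos μ x h.radius_pos, Measure.addHaar_ball_of_pos μ c hs,
      ENNReal.ofReal_rpow_of_pos hL, ← mul_assoc, ← ENNReal.ofReal_mul (by positivity)]
    refine ENNReal.mul_lt_mul_left (measure_ball_pos μ 0 one_pos).ne' measure_ball_lt_top.ne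
      ((ENNReal.ofReal_lt_ofReal_iff (by positivity)).2 ?_)
    rwa [mul_comm]
  have h_le : ENNReal.ofReal (L * A) ^ q * μ (ball c s) ≤ μ (ball x r) * ENNReal.ofReal A ^ q :=
    calc ENNReal.ofReal (L * A) ^ q * μ (ball c s)
        = ∫⁻ _ in ball c s, ENNReal.ofReal (L * A) ^ q ∂μ := (setLIntegral_const _ _).symm
      _ ≤ ∫⁻ y in ball c s, ENNReal.ofReal (g y) ^ q ∂μ := by
          refine setLIntegral_mono_ae' measurableSet_ball ?_
          filter_upwards [measure_eq_zero_iff_ae_notMem.1 h.null] with y hyZ hy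
          gcongr
          exact (hcon y hy hyZ).le
      _ ≤ ∫⁻ y in ball x r, ENNReal.ofReal (g y) ^ q ∂μ := lintegral_mono_set hsub
      _ ≤ _ := h.lintegral_le
  rw [ENNReal.ofReal_mul hL.le, ENNReal.mul_rpow_of_nonneg _ _ hq.le, mul_right_comm] at h_le
  exact absurd h_le (not_le.2 (ENNReal.mul_lt_mul_left
    (by simpa [hq] using hA) (ENNReal.rpow_ne_top_of_nonneg hq.le ofReal_ne_top) h_mass))

lemma exists_near_le_mul (h : HajlaszOnBall μ f g Z q x r A) (hq : 0 < q) {y : E}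
    (hy : y ∈ ball x r) {θ σ L : ℝ} (hθ : θ ≤ 1) (hσ : 0 < σ) (hσθ : σ ≤ θ * r) (hL : 0 < L)
    (hlt : r ^ finrank ℝ E < σ ^ finrank ℝ E * L ^ q) :
    ∃ z ∉ Z, g z ≤ L * A ∧ ‖z - x‖ < (1 - θ) * r + σ ∧ ‖y - z‖ < θ * r + σ := by
  have hr := h.radius_pos
  have hθ₀ : 0 ≤ θ := nonneg_of_mul_nonneg_left (hσ.le.trans hσθ) hr
  have hyx : dist y x ≤ r := (mem_ball.1 hy).le
  set c : E := AffineMap.lineMap y x θ with hc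
  have h_dist_x {z : E} (hz : z ∈ ball c σ) : dist z x < (1 - θ) * r + σ :=
    calc dist z x ≤ dist c x + dist z c := by linarith [dist_triangle z c x]
      _ = (1 - θ) * dist y x + dist z c := by
          rw [hc, dist_lineMap_right, Real.norm_of_nonneg (by linarith)]
      _ < (1 - θ) * r + σ :=
          add_lt_add_of_le_of_lt (mul_le_mul_of_nonneg_left hyx (by linarith)) hz
  obtain ⟨z, hz, hzZ, hgz⟩ := h.exists_mem_ball_le_mul hq (c := c) hσ hL
    (fun z hz => mem_ball.2 ((h_dist_x hz).trans_le (by linarith))) hlt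
  refine ⟨z, hzZ, hgz, dist_eq_norm z x ▸ h_dist_x hz, ?_⟩
  calc ‖y - z‖ ≤ dist y c + dist z c := dist_eq_norm y z ▸ dist_triangle_right y z c
    _ = θ * dist y x + dist z c := by rw [hc, dist_left_lineMap, Real.norm_of_nonneg hθ₀]
    _ < θ * r + σ := add_lt_add_of_le_of_lt (by gcongr) hz

lemma exists_forall_le_mul_abs_sub_le (h : HajlaszOnBall μ f g Z q x r A) (hq : 0 < q) {K : ℝ}
    (hK : 0 < K) (hKn : 4 ^ finrank ℝ E < K ^ q) :
    ∃ a : ℝ, ∀ y ∈ ball x r, y ∉ Z → g y ≤ K * A → |f y - a| ≤ 4 * K * r * A := by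
  have hr := h.radius_pos
  have h_mass : r ^ finrank ℝ E < (r / 4) ^ finrank ℝ E * K ^ q := by
    rw [div_pow, div_mul_eq_mul_div, lt_div_iff₀ (by positivity)]
    gcongr
  obtain ⟨z, hzZ, hgz, hzx, -⟩ := h.exists_near_le_mul hq (mem_ball_self hr) le_rfl
    (by positivity : 0 < r / 4) (by linarith) hK h_mass
  refine ⟨f z, fun y hy hyZ hgy => ?_⟩
  obtain ⟨w, hwZ, hgw, hwx, hyw⟩ := h.exists_near_le_mul hq hy (by norm_num : (1 / 2 : ℝ) ≤ 1)
    (by positivity : 0 < r / 4) (by linarith) hK h_mass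
  have hwz : ‖w - z‖ ≤ r := by
    rw [norm_sub_rev z x] at *
    linarith [norm_sub_le_norm_sub_add_norm_sub w x z]
  calc |f y - f z| ≤ |f y - f w| + |f w - f z| := abs_sub_le _ _ _
    _ ≤ r * (K * A + K * A) + r * (K * A + K * A) := add_le_add
        (h.abs_sub_le_mul hyZ hwZ (by linarith) h.radius_le_one hgy hgw)
        (h.abs_sub_le_mul hwZ hzZ hwz h.radius_le_one hgw hgz)
    _ = _ := by ring

lemma exists_le_mul_and_abs_sub_le (h : HajlaszOnBall μ f g Z q x r A) (hq : 0 < q)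
    (hnq : finrank ℝ E * (1 - q) < q) {L : ℝ} (hL : 1 < L) (hLq : 2 ≤ L ^ (1 - q)) {y : E}
    (hy : y ∈ ball x r) (hyZ : y ∉ Z) (hgy : g y ≤ 2 * (L * A)) :
    ∃ z ∈ ball x r, z ∉ Z ∧ g z ≤ L * A ∧ |f y - f z| ≤ 6 * r * A * L ^ q := by
  have hr := h.radius_pos
  have hL₀ : 0 < L := by linarith
  set θ : ℝ := (L ^ (1 - q))⁻¹ with hθ
  have hθ₀ : 0 < θ := by positivity
  have hθ₂ : θ ≤ 2⁻¹ := inv_anti₀ two_pos hLq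
  have h_mass : r ^ finrank ℝ E < (θ * r) ^ finrank ℝ E * L ^ q := by
    have h_one_lt : 1 < θ ^ finrank ℝ E * L ^ q := by
      rw [hθ, ← Real.rpow_neg hL₀.le, ← Real.rpow_natCast, ← Real.rpow_mul hL₀.le,
        ← Real.rpow_add hL₀]
      exact Real.one_lt_rpow hL (by linarith)
    rw [mul_pow, mul_right_comm]
    exact lt_mul_of_one_lt_left (by positivity) h_one_lt
  obtain ⟨z, hzZ, hgz, hzx, hyz⟩ := h.exists_near_le_mul hq hy (by linarith)
    (by positivity : 0 < θ * r) le_rfl hL₀ h_mass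
  refine ⟨z, mem_ball_iff_norm.2 (by linarith), hzZ, hgz, ?_⟩
  have hθL : θ * L = L ^ q := by
    rw [hθ, inv_mul_eq_div, Real.rpow_sub hL₀, Real.rpow_one, div_div_cancel₀ hL₀.ne']
  calc |f y - f z| ≤ (θ * r + θ * r) * (2 * (L * A) + L * A) :=
        h.abs_sub_le_mul hyZ hzZ hyz.le (by nlinarith [h.radius_le_one]) hgy hgz
    _ = 6 * r * A * (θ * L) := by ring
    _ = _ := by rw [hθL]

lemma abs_sub_le_two_pow_rpow (h : HajlaszOnBall μ f g Z q x r A) (hq : 0 < q)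
    (hnq : finrank ℝ E * (1 - q) < q) (hq₁ : q < 1) {K D a : ℝ} (hK : 1 < K)
    (hKq : 2 ≤ K ^ (1 - q)) (hD : 6 * K ^ q ≤ D * (2 ^ q - 1))
    (ha : ∀ y ∈ ball x r, y ∉ Z → g y ≤ K * A → |f y - a| ≤ D * r * A) (k : ℕ) :
    ∀ y ∈ ball x r, y ∉ Z → g y ≤ 2 ^ k * K * A → |f y - a| ≤ D * r * A * (2 ^ k : ℝ) ^ q := by
  have hr := h.radius_pos
  have hA := h.average_pos
  induction k with
  | zero => simpa using ha
  | succ k ih =>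
    intro y hy hyZ hgy
    have hKL : K ≤ 2 ^ k * K := le_mul_of_one_le_left (by linarith) (one_le_pow₀ one_le_two)
    obtain ⟨z, hz, hzZ, hgz, hfyz⟩ := h.exists_le_mul_and_abs_sub_le hq hnq (hK.trans_le hKL)
      (hKq.trans (Real.rpow_le_rpow (by linarith) hKL (by linarith))) hy hyZ
      (hgy.trans_eq (by ring))
    calc |f y - a| ≤ |f y - f z| + |f z - a| := abs_sub_le _ _ _
      _ ≤ 6 * r * A * (2 ^ k * K) ^ q + D * r * A * (2 ^ k : ℝ) ^ q :=
          add_le_add hfyz (ih z hz hzZ hgz)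
      _ = r * A * (2 ^ k : ℝ) ^ q * (6 * K ^ q + D) := by
          rw [Real.mul_rpow (by positivity) (by linarith)]
          ring
      _ ≤ r * A * (2 ^ k : ℝ) ^ q * (D * 2 ^ q) := by
          gcongr
          linarith
      _ = _ := by
          rw [pow_succ, Real.mul_rpow (by positivity) two_pos.le]
          ring

end HajlaszOnBall

lemma exists_one_lt_two_le_rpow_lt_rpow {q : ℝ} (hq : 0 < q) (hq₁ : q < 1) (B : ℝ) :
    ∃ K : ℝ, 1 < K ∧ 2 ≤ K ^ (1 - q) ∧ B < K ^ q :=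
  ((Filter.eventually_gt_atTop 1).and
    (((_root_.tendsto_rpow_atTop (sub_pos.2 hq₁)).eventually_ge_atTop 2).and
      ((_root_.tendsto_rpow_atTop hq).eventually_gt_atTop B))).exists

lemma abs_sub_le_of_forall_two_pow_rpow {q D K A u t : ℝ} (hq : 0 < q) (hq₁ : q < 1) (hD : 0 < D)
    (hK : 1 < K) (hA : 0 < A) (hu : 0 ≤ u)
    (h : ∀ k : ℕ, u ≤ 2 ^ k * K * A → t ≤ D * A * (2 ^ k : ℝ) ^ q) :
    t ≤ 2 * D * (A + A ^ (1 - q) * u ^ q) := by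
  rcases le_or_gt u (K * A) with huK | huK
  · have h_zero := h 0 (by simpa using huK)
    rw [pow_zero, Real.one_rpow, mul_one] at h_zero
    have : 0 ≤ D * (A ^ (1 - q) * u ^ q) := by positivity
    nlinarith
  · have hKA : 0 < K * A := by positivity
    obtain ⟨k, hk_le, hk_lt⟩ := exists_nat_pow_near ((one_le_div hKA).2 huK.le) one_lt_two
    have h_two : (2 : ℝ) ^ q ≤ 2 := Real.rpow_le_self_of_one_le one_le_two hq₁.le
    have h_pow : ((2 : ℝ) ^ k) ^ q ≤ (u / A) ^ q := by
      gcongr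
      exact hk_le.trans (by gcongr; exact le_mul_of_one_le_left hA.le hK.le)
    calc t ≤ D * A * (2 ^ (k + 1) : ℝ) ^ q :=
          h (k + 1) (by rw [mul_assoc]; exact ((div_lt_iff₀ hKA).1 hk_lt).le)
      _ ≤ D * A * ((u / A) ^ q * 2) := by
          rw [pow_succ, Real.mul_rpow (by positivity) two_pos.le]
          gcongr
      _ = 2 * D * (A ^ (1 - q) * u ^ q) := by
          rw [Real.div_rpow hu hA.le, Real.rpow_sub hA, Real.rpow_one]
          ring
      _ ≤ _ := by
          gcongr
          linarith

variable [NormedSpace ℝ E] [FiniteDimensional ℝ E] [BorelSpace E] (μ : Measure E)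
  [μ.IsAddHaarMeasure]

lemma exists_abs_sub_le_of_hajlaszOnBall {q : ℝ} (hq : 0 < q)
    (hnq : finrank ℝ E * (1 - q) < q) (hq₁ : q < 1) :
    ∃ D : ℝ, 0 < D ∧ ∀ {f g : E → ℝ} {Z : Set E} {x : E} {r A : ℝ},
      HajlaszOnBall μ f g Z q x r A → ∃ a : ℝ, ∀ y ∈ ball x r, y ∉ Z →
        |f y - a| ≤ D * r * (A + A ^ (1 - q) * g y ^ q) := by
  obtain ⟨K, hK, hKq, hKn⟩ := exists_one_lt_two_le_rpow_lt_rpow hq hq₁ (4 ^ finrank ℝ E)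
  have h_two : 0 < (2 : ℝ) ^ q - 1 := sub_pos.2 (Real.one_lt_rpow one_lt_two hq)
  set D : ℝ := max (4 * K) (6 * K ^ q / (2 ^ q - 1))
  have hD₀ : 0 < D := lt_max_of_lt_left (by linarith)
  refine ⟨2 * D, mul_pos two_pos hD₀, fun {f g Z x r A} h => ?_⟩
  have hr := h.radius_pos
  have hA := h.average_pos
  obtain ⟨a, ha⟩ := h.exists_forall_le_mul_abs_sub_le hq (by linarith) hKn
  refine ⟨a, fun y hy hyZ => ?_⟩
  have h_dyadic := h.abs_sub_le_two_pow_rpow hq hnq hq₁ (D := D) hK hKq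
    ((div_le_iff₀ h_two).1 (le_max_right _ _)) (fun y hy hyZ hgy => (ha y hy hyZ hgy).trans
      (by gcongr; exact le_max_left _ _))
  rw [mul_assoc 2 D]
  exact abs_sub_le_of_forall_two_pow_rpow hq hq₁ (mul_pos hD₀ hr) hK hA (h.nonneg y)
    fun k hgy => h_dyadic k y hy hyZ hgy

lemma exists_setLIntegral_enorm_sub_le_of_hajlaszOnBall {q : ℝ} (hq : 0 < q)
    (hnq : finrank ℝ E * (1 - q) < q) (hq₁ : q < 1) :
    ∃ D : ℝ, 0 < D ∧ ∀ {f g : E → ℝ} {Z : Set E} {x : E} {r A : ℝ},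
      HajlaszOnBall μ f g Z q x r A → ∃ a : ℝ,
        ∫⁻ y in ball x r, ‖f y - a‖ₑ ∂μ ≤ ENNReal.ofReal (D * r * A) * μ (ball x r) := by
  obtain ⟨D, hD, h_poincare⟩ := exists_abs_sub_le_of_hajlaszOnBall μ hq hnq hq₁
  refine ⟨2 * D, by positivity, fun {f g Z x r A} h => ?_⟩
  have hr := h.radius_pos
  have hA := h.average_pos
  obtain ⟨a, ha⟩ := h_poincare h
  refine ⟨a, ?_⟩
  have h_bound : ∀ᵐ y ∂μ, y ∈ ball x r → ‖f y - a‖ₑ ≤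
      ENNReal.ofReal (D * r * A) +
        ENNReal.ofReal (D * r * A ^ (1 - q)) * ENNReal.ofReal (g y) ^ q := by
    filter_upwards [measure_eq_zero_iff_ae_notMem.1 h.null] with y hyZ hy
    rw [Real.enorm_eq_ofReal_abs, ENNReal.ofReal_rpow_of_nonneg (h.nonneg y) hq.le,
      ← ENNReal.ofReal_mul (by positivity), ← ENNReal.ofReal_add (by positivity)
        (mul_nonneg (by positivity) (Real.rpow_nonneg (h.nonneg y) q))]
    exact ENNReal.ofReal_le_ofReal ((ha y hy hyZ).trans_eq (by ring))
  have h_rpow : D * r * A ^ (1 - q) * A ^ q = D * r * A := by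
    rw [mul_assoc, ← Real.rpow_add hA, sub_add_cancel, Real.rpow_one]
  calc ∫⁻ y in ball x r, ‖f y - a‖ₑ ∂μ
      ≤ ∫⁻ y in ball x r, (ENNReal.ofReal (D * r * A) +
          ENNReal.ofReal (D * r * A ^ (1 - q)) * ENNReal.ofReal (g y) ^ q) ∂μ :=
        setLIntegral_mono_ae' measurableSet_ball h_bound
    _ = ENNReal.ofReal (D * r * A) * μ (ball x r) + ENNReal.ofReal (D * r * A ^ (1 - q)) *
          ∫⁻ y in ball x r, ENNReal.ofReal (g y) ^ q ∂μ := by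
        rw [lintegral_add_left measurable_const, setLIntegral_const,
          lintegral_const_mul' _ _ ofReal_ne_top]
    _ ≤ ENNReal.ofReal (D * r * A) * μ (ball x r) + ENNReal.ofReal (D * r * A ^ (1 - q)) *
          (μ (ball x r) * ENNReal.ofReal A ^ q) := by
        gcongr
        exact h.lintegral_le
    _ = _ := by
        rw [mul_comm (μ _), ← mul_assoc, ENNReal.ofReal_rpow_of_pos hA,
          ← ENNReal.ofReal_mul (by positivity), h_rpow, ← add_mul,
          ← ENNReal.ofReal_add (by positivity) (by positivity)]
        ring_nf

end HajlaszPoincare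

section Convolution

open ContinuousLinearMap (mul)
open scoped Convolution

variable {E : Type*} [NormedAddCommGroup E]

lemma apply_sub_eq_zero_of_notMem_ball {η : E → ℝ} {t : ℝ} (hη : Function.support η ⊆ ball 0 t)
    {x y : E} (hy : y ∉ ball x t) : η (x - y) = 0 := by
  by_contra h
  rw [mem_ball_iff_norm, norm_sub_rev] at hy
  exact hy (mem_ball_zero_iff.1 (hη h))

lemma hasCompactSupport_of_tsupport_subset_ball [ProperSpace E] {η : E → ℝ} {t : ℝ}
    (hη : tsupport η ⊆ ball 0 t) :
    HasCompactSupport η :=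
  .of_support_subset_isCompact (isCompact_closedBall 0 t)
    ((subset_tsupport η).trans (hη.trans ball_subset_closedBall))

variable [MeasurableSpace E] [BorelSpace E] {μ : Measure E}
  [μ.IsAddLeftInvariant] [μ.IsNegInvariant]

lemma convolution_mul_comm (φ f : E → ℝ) : φ ⋆[mul ℝ ℝ, μ] f = f ⋆[mul ℝ ℝ, μ] φ := by
  funext x
  rw [convolution_mul, convolution_mul_swap]
  simp only [mul_comm]

lemma enorm_convolution_le_lintegral (η h : E → ℝ) (x : E) :
    ‖(η ⋆[mul ℝ ℝ, μ] h) x‖ₑ ≤ ∫⁻ y, ‖η (x - y)‖ₑ * ‖h y‖ₑ ∂μ := by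
  rw [convolution_mul_swap]
  simpa only [enorm_mul] using enorm_integral_le_lintegral_enorm fun y => η (x - y) * h y

lemma enorm_convolution_le_mul_setLIntegral {η : E → ℝ} {t B : ℝ}
    (hη : Function.support η ⊆ ball 0 t) (hB : ∀ z, |η z| ≤ B) (h : E → ℝ) (x : E) :
    ‖(η ⋆[mul ℝ ℝ, μ] h) x‖ₑ ≤ ENNReal.ofReal B * ∫⁻ y in ball x t, ‖h y‖ₑ ∂μ := by
  have h_supp : (Function.support fun y => ‖η (x - y)‖ₑ * ‖h y‖ₑ) ⊆ ball x t := fun y hy => by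
    by_contra hy'
    exact hy (by simp only [apply_sub_eq_zero_of_notMem_ball hη hy', enorm_zero, zero_mul])
  calc ‖(η ⋆[mul ℝ ℝ, μ] h) x‖ₑ
      ≤ ∫⁻ y in ball x t, ‖η (x - y)‖ₑ * ‖h y‖ₑ ∂μ :=
        (enorm_convolution_le_lintegral η h x).trans_eq
          (setLIntegral_eq_of_support_subset h_supp).symm
    _ ≤ ∫⁻ y in ball x t, ENNReal.ofReal B * ‖h y‖ₑ ∂μ := by
        gcongr with y
        exact (Real.enorm_eq_ofReal_abs _).trans_le (ENNReal.ofReal_le_ofReal (hB _))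
    _ = ENNReal.ofReal B * ∫⁻ y in ball x t, ‖h y‖ₑ ∂μ :=
        lintegral_const_mul' _ _ ofReal_ne_top

lemma enorm_convolution_le_lintegral_mul {η : E → ℝ} {t : ℝ} (hη : Continuous η)
    (hη_supp : Function.support η ⊆ ball 0 t) {h : E → ℝ} {β : ℝ≥0∞} {x : E}
    (hβ : ∀ y ∈ ball x t, ‖h y‖ₑ ≤ β) :
    ‖(η ⋆[mul ℝ ℝ, μ] h) x‖ₑ ≤ (∫⁻ z, ‖η z‖ₑ ∂μ) * β :=
  calc ‖(η ⋆[mul ℝ ℝ, μ] h) x‖ₑ ≤ ∫⁻ y, ‖η (x - y)‖ₑ * ‖h y‖ₑ ∂μ :=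
        enorm_convolution_le_lintegral η h x
    _ ≤ ∫⁻ y, ‖η (x - y)‖ₑ * β ∂μ := lintegral_mono fun y => by
        by_cases hy : y ∈ ball x t
        · exact mul_le_mul_right (hβ y hy) _
        · simp only [apply_sub_eq_zero_of_notMem_ball hη_supp hy, enorm_zero, zero_mul, le_rfl]
    _ = (∫⁻ z, ‖η z‖ₑ ∂μ) * β := by
        have h_meas : Measurable fun y => ‖η (x - y)‖ₑ :=
          (hη.comp (continuous_sub_left x)).enorm.measurable
        rw [lintegral_mul_const _ h_meas, lintegral_sub_left_eq_self (fun z => ‖η z‖ₑ)]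

lemma convolution_sub_integral_mul [IsFiniteMeasureOnCompacts μ] {η f : E → ℝ} (hη : Continuous η)
    (hη_supp : HasCompactSupport η) (hf : LocallyIntegrable f μ) (a : ℝ) (x : E) :
    (η ⋆[mul ℝ ℝ, μ] f) x - (∫ z, η z ∂μ) * a = (η ⋆[mul ℝ ℝ, μ] fun y => f y - a) x := by
  have h_int : Integrable (fun y => η (x - y) * f y) μ :=
    (hη_supp.convolutionExists_left (mul ℝ ℝ) hη hf x).integrable_swap
  have h_int_const : Integrable (fun y => η (x - y) * a) μ :=
    ((hη.integrable_of_hasCompactSupport hη_supp).comp_sub_left x).mul_const a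
  simp only [convolution_mul_swap, mul_sub]
  rw [integral_sub h_int h_int_const, integral_mul_const, integral_sub_left_eq_self]

lemma enorm_convolution_sub_convolution_le [IsFiniteMeasureOnCompacts μ] {η v : E → ℝ}
    {ρ τ Λ : ℝ} (hη : Continuous η) (hη_cpt : HasCompactSupport η)
    (hη_supp : Function.support η ⊆ ball 0 ρ) (hη_lip : ∀ z z', |η z - η z'| ≤ Λ * ‖z - z'‖)
    (hΛ : 0 ≤ Λ) (hv : LocallyIntegrable v μ) {y z : E} (hz : ‖z - y‖ ≤ τ) :
    ‖(η ⋆[mul ℝ ℝ, μ] v) z - (η ⋆[mul ℝ ℝ, μ] v) y‖ₑ ≤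
      ENNReal.ofReal (Λ * τ) * ∫⁻ s in ball y (ρ + τ), ‖v s‖ₑ ∂μ := by
  have h_int (x : E) : Integrable (fun s => η (x - s) * v s) μ :=
    (hη_cpt.convolutionExists_left (mul ℝ ℝ) hη hv x).integrable_swap
  have h_translate : (η ⋆[mul ℝ ℝ, μ] v) z - (η ⋆[mul ℝ ℝ, μ] v) y =
      ((fun w => η (w + (z - y)) - η w) ⋆[mul ℝ ℝ, μ] v) y := by
    simp only [convolution_mul_swap, sub_mul]
    rw [← integral_sub (h_int z) (h_int y)]
    refine integral_congr_ae (.of_forall fun s => ?_)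
    simp only [show y - s + (z - y) = z - s by abel]
  rw [h_translate]
  refine enorm_convolution_le_mul_setLIntegral (fun w hw => ?_) (fun w => ?_) v y
  · by_contra hw_ball
    rw [mem_ball_zero_iff, not_lt] at hw_ball
    have h_far {w' : E} (hw' : ρ ≤ ‖w'‖) : η w' = 0 := by
      by_contra h
      exact hw'.not_gt (mem_ball_zero_iff.1 (hη_supp h))
    have h_tri : ‖w‖ ≤ ‖w + (z - y)‖ + ‖z - y‖ := norm_le_add_norm_add w (z - y)
    refine hw ?_
    simp only [h_far (show ρ ≤ ‖w‖ by linarith [norm_nonneg (z - y)]),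
      h_far (show ρ ≤ ‖w + (z - y)‖ by linarith), sub_zero]
  · refine (hη_lip _ _).trans ?_
    rw [add_sub_cancel_left]
    gcongr

variable [NormedSpace ℝ E] [FiniteDimensional ℝ E] [IsFiniteMeasureOnCompacts μ]

lemma convolution_convolution_assoc {φ η f : E → ℝ} (hφ : Continuous φ)
    (hφ_supp : HasCompactSupport φ) (hη : Continuous η) (hη_supp : HasCompactSupport η)
    (hf : LocallyIntegrable f μ) :
    (φ ⋆[mul ℝ ℝ, μ] η) ⋆[mul ℝ ℝ, μ] f = φ ⋆[mul ℝ ℝ, μ] (η ⋆[mul ℝ ℝ, μ] f) := by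
  funext x
  have hf_norm : LocallyIntegrable (fun y => ‖f y‖) μ := fun y => (hf y).norm
  refine convolution_assoc (mul ℝ ℝ) (mul ℝ ℝ) (mul ℝ ℝ) (mul ℝ ℝ) mul_assoc
    hφ.aestronglyMeasurable hη.aestronglyMeasurable hf.aestronglyMeasurable
    (.of_forall (hφ_supp.convolutionExists_left _ hφ hη.locallyIntegrable))
    (.of_forall (hη_supp.norm.convolutionExists_left _ hη.norm hf_norm)) ?_
  exact hφ_supp.norm.convolutionExists_left _ hφ.norm
    (hη_supp.norm.continuous_convolution_left _ hη.norm hf_norm).locallyIntegrable x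

lemma convolution_convolution_left_comm {φ η f : E → ℝ} (hφ : Continuous φ)
    (hφ_supp : HasCompactSupport φ) (hη : Continuous η) (hη_supp : HasCompactSupport η)
    (hf : LocallyIntegrable f μ) :
    φ ⋆[mul ℝ ℝ, μ] (η ⋆[mul ℝ ℝ, μ] f) = η ⋆[mul ℝ ℝ, μ] (φ ⋆[mul ℝ ℝ, μ] f) := by
  rw [← convolution_convolution_assoc hφ hφ_supp hη hη_supp hf, convolution_mul_comm φ η,
    convolution_convolution_assoc hη hη_supp hφ hφ_supp hf]

lemma differentiable_convolution_left {φ f : E → ℝ} (hφ : ContDiff ℝ 1 φ)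
    (hφ_supp : HasCompactSupport φ) (hf : LocallyIntegrable f μ) :
    Differentiable ℝ (φ ⋆[mul ℝ ℝ, μ] f) := fun x =>
  (hφ_supp.hasFDerivAt_convolution_left (mul ℝ ℝ) hφ hf x).differentiableAt

lemma fderiv_convolution_left_apply {φ f : E → ℝ} (hφ : ContDiff ℝ 1 φ)
    (hφ_supp : HasCompactSupport φ) (hf : LocallyIntegrable f μ) (x e : E) :
    fderiv ℝ (φ ⋆[mul ℝ ℝ, μ] f) x e = ((fun z => fderiv ℝ φ z e) ⋆[mul ℝ ℝ, μ] f) x := by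
  rw [convolution_mul_comm, (hφ_supp.hasFDerivAt_convolution_right (mul ℝ ℝ) hf hφ x).fderiv,
    convolution_precompR_apply _ hf (hφ_supp.fderiv ℝ) (hφ.continuous_fderiv one_ne_zero),
    convolution_mul, convolution_mul_swap]
  simp only [mul_comm]

lemma convolution_fderiv_convolution_swap {φ η f : E → ℝ} (hφ : ContDiff ℝ 1 φ)
    (hφ_supp : HasCompactSupport φ) (hη : ContDiff ℝ 1 η) (hη_supp : HasCompactSupport η)
    (hf : LocallyIntegrable f μ) (e : E) :
    φ ⋆[mul ℝ ℝ, μ] ((fun z => fderiv ℝ η z e) ⋆[mul ℝ ℝ, μ] f) =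
      η ⋆[mul ℝ ℝ, μ] ((fun z => fderiv ℝ φ z e) ⋆[mul ℝ ℝ, μ] f) := by
  have h_cont {ξ : E → ℝ} (hξ : ContDiff ℝ 1 ξ) : Continuous fun z => fderiv ℝ ξ z e :=
    (hξ.continuous_fderiv one_ne_zero).clm_apply continuous_const
  have h_loc {ξ : E → ℝ} (hξ : ContDiff ℝ 1 ξ) (hξ_supp : HasCompactSupport ξ) :
      LocallyIntegrable (ξ ⋆[mul ℝ ℝ, μ] f) μ :=
    (hξ_supp.continuous_convolution_left _ hξ.continuous hf).locallyIntegrable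
  rw [convolution_convolution_left_comm hφ.continuous hφ_supp (h_cont hη)
      (hη_supp.fderiv_apply ℝ e) hf,
    convolution_convolution_left_comm hη.continuous hη_supp (h_cont hφ)
      (hφ_supp.fderiv_apply ℝ e) hf]
  funext x
  rw [← fderiv_convolution_left_apply hη hη_supp (h_loc hφ hφ_supp),
    ← fderiv_convolution_left_apply hφ hφ_supp (h_loc hη hη_supp),
    convolution_convolution_left_comm hη.continuous hη_supp hφ.continuous hφ_supp hf]

end Convolution

section Dilation

open Module (finrank)
open ContinuousLinearMap (mul)
open scoped Convolution

variable {E : Type*} [NormedAddCommGroup E] [NormedSpace ℝ E] {φ : E → ℝ} {t : ℝ}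

/-- The dilate `φ_t(z) = t⁻ⁿ φ(z / t)`, where `n` is the dimension of `E`, normalised so as to
preserve the integral. -/
def dilate (φ : E → ℝ) (t : ℝ) (z : E) : ℝ := t⁻¹ ^ finrank ℝ E * φ (t⁻¹ • z)

lemma contDiff_dilate (hφ : ContDiff ℝ 1 φ) (t : ℝ) : ContDiff ℝ 1 (dilate φ t) :=
  contDiff_const.mul (hφ.comp (contDiff_const_smul _))

lemma tsupport_dilate_subset (hφ : tsupport φ ⊆ ball 0 1) (ht : 0 < t) :
    tsupport (dilate φ t) ⊆ ball 0 t := by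
  have h_sub : tsupport (dilate φ t) ⊆ (t⁻¹ • ·) ⁻¹' tsupport φ :=
    (tsupport_mul_subset_right (g := fun z => φ (t⁻¹ • z))).trans
      (tsupport_comp_subset_preimage φ (continuous_const_smul _))
  intro z hz
  have hz' : ‖t⁻¹ • z‖ < 1 := mem_ball_zero_iff.1 (hφ (h_sub hz))
  rwa [norm_smul, norm_inv, Real.norm_of_nonneg ht.le, inv_mul_lt_one₀ ht,
    ← mem_ball_zero_iff] at hz'

lemma exists_abs_le_and_norm_fderiv_le [FiniteDimensional ℝ E] (hφ : ContDiff ℝ 1 φ)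
    (hφ_supp : tsupport φ ⊆ ball 0 1) :
    ∃ A > 0, (∀ z, |φ z| ≤ A) ∧ ∀ z, ‖fderiv ℝ φ z‖ ≤ A := by
  have h_supp := hasCompactSupport_of_tsupport_subset_ball hφ_supp
  obtain ⟨A₀, hA₀⟩ := h_supp.exists_bound_of_continuous hφ.continuous
  obtain ⟨A₁, hA₁⟩ :=
    (h_supp.fderiv ℝ).exists_bound_of_continuous (hφ.continuous_fderiv one_ne_zero)
  exact ⟨max 1 (max A₀ A₁), by positivity, fun z => (hA₀ z).trans (by simp),
    fun z => (hA₁ z).trans (by simp)⟩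

lemma fderiv_dilate_apply (φ : E → ℝ) (t : ℝ) (z e : E) :
    fderiv ℝ (dilate φ t) z e = t⁻¹ ^ (finrank ℝ E + 1) * fderiv ℝ φ (t⁻¹ • z) e := by
  have h_eq : dilate φ t = t⁻¹ ^ finrank ℝ E • fun z => φ (t⁻¹ • z) := rfl
  rw [h_eq, fderiv_const_smul_field, Pi.smul_apply, fderiv_comp_smul, pow_succ, mul_assoc]
  rfl

lemma tsupport_fderiv_dilate_apply_subset (hφ : tsupport φ ⊆ ball 0 1) (ht : 0 < t) (e : E) :
    tsupport (fun z => fderiv ℝ (dilate φ t) z e) ⊆ ball 0 t :=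
  (tsupport_fderiv_apply_subset ℝ e).trans (tsupport_dilate_subset hφ ht)

lemma continuous_fderiv_dilate_apply (hφ : ContDiff ℝ 1 φ) (t : ℝ) (e : E) :
    Continuous fun z => fderiv ℝ (dilate φ t) z e :=
  ((contDiff_dilate hφ t).continuous_fderiv one_ne_zero).clm_apply continuous_const

lemma abs_fderiv_dilate_apply_le {A : ℝ} (hA : ∀ z, ‖fderiv ℝ φ z‖ ≤ A) (ht : 0 < t) (z e : E) :
    |fderiv ℝ (dilate φ t) z e| ≤ A * t⁻¹ ^ (finrank ℝ E + 1) * ‖e‖ := by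
  rw [fderiv_dilate_apply, abs_mul, abs_of_pos (by positivity), mul_comm A, mul_assoc]
  gcongr
  exact (fderiv ℝ φ (t⁻¹ • z)).le_of_opNorm_le (hA _) e

variable [MeasurableSpace E] [BorelSpace E] [FiniteDimensional ℝ E] (μ : Measure E)
  [μ.IsAddHaarMeasure]

lemma integral_dilate (φ : E → ℝ) (ht : 0 < t) : ∫ z, dilate φ t z ∂μ = ∫ z, φ z ∂μ := by
  simp only [dilate]
  rw [integral_const_mul, Measure.integral_comp_inv_smul_of_nonneg μ φ ht.le, smul_eq_mul,
    ← mul_assoc, ← mul_pow, inv_mul_cancel₀ ht.ne', one_pow, one_mul]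

lemma integral_fderiv_apply_eq_zero (hφ : ContDiff ℝ 1 φ) (hφ_supp : HasCompactSupport φ) (e : E) :
    ∫ z, fderiv ℝ φ z e ∂μ = 0 := by
  have h_int : Integrable (fun z => fderiv ℝ φ z e) μ :=
    ((hφ.continuous_fderiv one_ne_zero).clm_apply continuous_const).integrable_of_hasCompactSupport
      (hφ_supp.fderiv_apply ℝ e)
  simpa using integral_mul_fderiv_eq_neg_fderiv_mul_of_integrable (μ := μ) (f := fun _ => (1 : ℝ))
    (g := φ) (v := e) (by simp) (by simpa using h_int)
    (by simpa using hφ.continuous.integrable_of_hasCompactSupport hφ_supp)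
    (fun _ _ => differentiableAt_const _) (fun z _ => hφ.differentiable one_ne_zero z)

/-- `(∂_e φ_t) ⋆ f`, that is, the distributional derivative of `f` in the direction `e` smoothed at
scale `t`. -/
def mollifiedDeriv (φ f : E → ℝ) (e : E) (t : ℝ) : E → ℝ :=
  (fun z => fderiv ℝ (dilate φ t) z e) ⋆[mul ℝ ℝ, μ] f

variable {μ} {f : E → ℝ} {e : E}

lemma continuous_mollifiedDeriv (hφ : ContDiff ℝ 1 φ) (hφ_supp : tsupport φ ⊆ ball 0 1)
    (hf : LocallyIntegrable f μ) (ht : 0 < t) : Continuous (mollifiedDeriv μ φ f e t) :=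
  (hasCompactSupport_of_tsupport_subset_ball
    (tsupport_fderiv_dilate_apply_subset hφ_supp ht e)).continuous_convolution_left _
      (continuous_fderiv_dilate_apply hφ t e) hf

-- The kernel of `mollifiedDeriv` has integral zero, so a constant may be subtracted from `f`.
lemma enorm_mollifiedDeriv_le_mul_setLIntegral {A : ℝ} (hφ : ContDiff ℝ 1 φ)
    (hφ_supp : tsupport φ ⊆ ball 0 1) (hA : ∀ z, ‖fderiv ℝ φ z‖ ≤ A) (hf : LocallyIntegrable f μ)
    (ht : 0 < t) (e : E) (a : ℝ) (x : E) :
    ‖mollifiedDeriv μ φ f e t x‖ₑ ≤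
      ENNReal.ofReal (A * t⁻¹ ^ (finrank ℝ E + 1) * ‖e‖) * ∫⁻ y in ball x t, ‖f y - a‖ₑ ∂μ := by
  have h_supp := tsupport_fderiv_dilate_apply_subset hφ_supp ht e
  have h_sub := convolution_sub_integral_mul (continuous_fderiv_dilate_apply hφ t e)
    (hasCompactSupport_of_tsupport_subset_ball h_supp) hf a x
  rw [integral_fderiv_apply_eq_zero μ (contDiff_dilate hφ t)
    (hasCompactSupport_of_tsupport_subset_ball (tsupport_dilate_subset hφ_supp ht)), zero_mul,
    sub_zero] at h_sub
  rw [mollifiedDeriv, h_sub]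
  exact enorm_convolution_le_mul_setLIntegral ((subset_tsupport _).trans h_supp)
    (fun z => abs_fderiv_dilate_apply_le hA ht z e) _ x

lemma enorm_mollifiedDeriv_le_of_setLIntegral_le {A D K a : ℝ} {x : E} (hφ : ContDiff ℝ 1 φ)
    (hφ_supp : tsupport φ ⊆ ball 0 1) (hA : ∀ z, ‖fderiv ℝ φ z‖ ≤ A) (hf : LocallyIntegrable f μ)
    (ht : 0 < t) (he : ‖e‖ ≤ 1) (hK : 0 ≤ K)
    (ha : ∫⁻ y in ball x t, ‖f y - a‖ₑ ∂μ ≤ ENNReal.ofReal (D * t * K) * μ (ball x t)) :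
    ‖mollifiedDeriv μ φ f e t x‖ₑ ≤
      ENNReal.ofReal (A * D) * μ (ball 0 1) * ENNReal.ofReal K := by
  have hA₀ : 0 ≤ A := (norm_nonneg _).trans (hA 0)
  calc ‖mollifiedDeriv μ φ f e t x‖ₑ
      ≤ ENNReal.ofReal (A * t⁻¹ ^ (finrank ℝ E + 1)) * ∫⁻ y in ball x t, ‖f y - a‖ₑ ∂μ := by
        refine (enorm_mollifiedDeriv_le_mul_setLIntegral hφ hφ_supp hA hf ht e a x).trans ?_
        exact mul_le_mul_left (ENNReal.ofReal_le_ofReal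
          (mul_le_of_le_one_right (by positivity) he)) _
    _ ≤ ENNReal.ofReal (A * t⁻¹ ^ (finrank ℝ E + 1)) *
          (ENNReal.ofReal (D * t * K) * μ (ball x t)) := by gcongr
    _ = ENNReal.ofReal (A * D) * μ (ball 0 1) * ENNReal.ofReal K := by
        rw [Measure.addHaar_ball_of_pos μ x ht, ← mul_assoc, ← mul_assoc, mul_right_comm _ (μ _),
          ← ENNReal.ofReal_mul (by positivity), ← ENNReal.ofReal_mul' (by positivity),
          ← ENNReal.ofReal_mul' hK]
        congr 2
        rw [pow_succ, inv_pow]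
        field_simp

variable (μ)

lemma exists_enorm_mollifiedDeriv_le_hardyLittlewoodMax {q : ℝ} (hq : 0 < q)
    (hnq : finrank ℝ E * (1 - q) < q) (hq₁ : q < 1) (hφ : ContDiff ℝ 1 φ)
    (hφ_supp : tsupport φ ⊆ ball 0 1) :
    ∃ C ≠ ⊤, ∀ {f g : E → ℝ} {Z : Set E}, LocallyIntegrable f μ → μ Z = 0 → (∀ y, 0 ≤ g y) →
      (∀ y ∉ Z, ∀ z ∉ Z, ‖y - z‖ ≤ 1 → |f y - f z| ≤ ‖y - z‖ * (g y + g z)) →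
      ∀ {t : ℝ} {e : E}, 0 < t → t ≤ 1 → ‖e‖ ≤ 1 → ∀ x, ‖mollifiedDeriv μ φ f e t x‖ₑ ≤
        C * hardyLittlewoodMax μ (fun y => ENNReal.ofReal (g y) ^ q) x ^ (1 / q) := by
  obtain ⟨D, hD, hD_poincare⟩ := exists_setLIntegral_enorm_sub_le_of_hajlaszOnBall μ hq hnq hq₁
  obtain ⟨A, hA₀, -, hA⟩ := exists_abs_le_and_norm_fderiv_le hφ hφ_supp
  set C := ENNReal.ofReal (A * D) * μ (ball 0 1)
  have hC₀ : C ≠ 0 :=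
    mul_ne_zero (ofReal_pos.2 (mul_pos hA₀ hD)).ne' (measure_ball_pos μ 0 one_pos).ne'
  have hC : C ≠ ⊤ := mul_ne_top ofReal_ne_top measure_ball_lt_top.ne
  refine ⟨C, hC, fun {f g Z} hf hZ hg hfg {t e} ht ht₁ he x => ?_⟩
  refine ENNReal.le_mul_of_forall_lt (.inl hC₀) (.inl hC) fun C' hC' K hK => ?_
  obtain rfl | hK_top := eq_or_ne K ⊤
  · simp [ENNReal.mul_top (pos_of_gt hC').ne']
  have h_avg : hardyLittlewoodMax μ (fun y => ENNReal.ofReal (g y) ^ q) x ≤ K ^ q :=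
    (ENNReal.rpow_inv_le_iff hq).1 (by simpa only [one_div] using hK.le)
  have h_ball : HajlaszOnBall μ f g Z q x t K.toReal :=
    { null := hZ
      nonneg := hg
      hajlasz_le := hfg
      radius_pos := ht
      radius_le_one := ht₁
      average_pos := ENNReal.toReal_pos (pos_of_gt hK).ne' hK_top
      lintegral_le := by
        rw [ENNReal.ofReal_toReal hK_top]
        exact (setLIntegral_ball_le_mul_hardyLittlewoodMax _ (mem_ball_self ht)).trans (by gcongr) }
  obtain ⟨a, ha⟩ := hD_poincare h_ball
  calc ‖mollifiedDeriv μ φ f e t x‖ₑ ≤ C * ENNReal.ofReal K.toReal :=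
        enorm_mollifiedDeriv_le_of_setLIntegral_le hφ hφ_supp hA hf ht he toReal_nonneg ha
    _ ≤ C' * K := by
        rw [ENNReal.ofReal_toReal hK_top]
        gcongr

end Dilation

section DyadicMollification

open Filter Topology
open Module (finrank)
open ContinuousLinearMap (mul)
open scoped Convolution

variable {E : Type*} [NormedAddCommGroup E] [NormedSpace ℝ E] {φ : E → ℝ} {t : ℝ}

/-- The scales `2⁻ᵏ` at which functions are mollified. -/
def dyadicScale (k : ℕ) : ℝ := 2⁻¹ ^ k

lemma dyadicScale_pos (k : ℕ) : 0 < dyadicScale k := by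
  unfold dyadicScale
  positivity

lemma dyadicScale_le_one (k : ℕ) : dyadicScale k ≤ 1 :=
  pow_le_one₀ (by norm_num) (by norm_num)

lemma antitone_dyadicScale : Antitone dyadicScale :=
  pow_right_anti₀ (by norm_num) (by norm_num)

lemma two_mul_dyadicScale_succ (k : ℕ) : 2 * dyadicScale (k + 1) = dyadicScale k := by
  rw [dyadicScale, dyadicScale, pow_succ']
  ring

lemma four_mul_dyadicScale_add_two (k : ℕ) : 4 * dyadicScale (k + 2) = dyadicScale k := by
  linarith [two_mul_dyadicScale_succ k, two_mul_dyadicScale_succ (k + 1)]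

lemma four_mul_dyadicScale_le {k i : ℕ} (hi : k + 2 ≤ i) : 4 * dyadicScale i ≤ dyadicScale k := by
  rw [← four_mul_dyadicScale_add_two k]
  gcongr
  exact antitone_dyadicScale hi

lemma tendsto_dyadicScale : Tendsto dyadicScale atTop (𝓝 0) :=
  tendsto_pow_atTop_nhds_zero_of_lt_one (by norm_num) (by norm_num)

lemma abs_dilate_le {A : ℝ} (hA : ∀ z, |φ z| ≤ A) (ht : 0 < t) (z : E) :
    |dilate φ t z| ≤ A * t⁻¹ ^ finrank ℝ E := by
  rw [dilate, abs_mul, abs_of_pos (by positivity), mul_comm A]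
  gcongr
  exact hA _

lemma abs_dilate_sub_dilate_le {A : ℝ} (hφ : ContDiff ℝ 1 φ) (hA : ∀ z, ‖fderiv ℝ φ z‖ ≤ A)
    (ht : 0 < t) (z z' : E) :
    |dilate φ t z - dilate φ t z'| ≤ A * t⁻¹ ^ (finrank ℝ E + 1) * ‖z - z'‖ :=
  have hA₀ : 0 ≤ A := (norm_nonneg _).trans (hA 0)
  convex_univ.norm_image_sub_le_of_norm_fderiv_le (𝕜 := ℝ)
    (fun x _ => (contDiff_dilate hφ t).differentiable one_ne_zero x)
    (fun x _ => ContinuousLinearMap.opNorm_le_bound _ (by positivity)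
      (abs_fderiv_dilate_apply_le hA ht x)) (mem_univ z') (mem_univ z)

variable [MeasurableSpace E] {μ : Measure E}

/-- A `C¹` approximate identity kernel: `φ` is supported in the open unit ball and has integral
one. It need not be nonnegative. -/
structure IsMollifier (μ : Measure E) (φ : E → ℝ) : Prop where
  contDiff : ContDiff ℝ 1 φ
  tsupport_subset : tsupport φ ⊆ ball 0 1
  integral_eq_one : ∫ z, φ z ∂μ = 1

namespace IsMollifier

lemma continuous_dilate (hφ : IsMollifier μ φ) (t : ℝ) : Continuous (dilate φ t) :=
  (contDiff_dilate hφ.contDiff t).continuous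

lemma support_dilate_subset (hφ : IsMollifier μ φ) (ht : 0 < t) :
    Function.support (dilate φ t) ⊆ ball 0 t :=
  (subset_tsupport _).trans (tsupport_dilate_subset hφ.tsupport_subset ht)

lemma hasCompactSupport_dilate [FiniteDimensional ℝ E] (hφ : IsMollifier μ φ) (ht : 0 < t) :
    HasCompactSupport (dilate φ t) :=
  hasCompactSupport_of_tsupport_subset_ball (tsupport_dilate_subset hφ.tsupport_subset ht)

end IsMollifier

variable [BorelSpace E] [FiniteDimensional ℝ E] [μ.IsAddHaarMeasure]

lemma lintegral_enorm_dilate (hφ : Continuous φ) (hφ_supp : tsupport φ ⊆ ball 0 1) (ht : 0 < t) :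
    ∫⁻ z, ‖dilate φ t z‖ₑ ∂μ = ∫⁻ z, ‖φ z‖ₑ ∂μ := by
  have h_dilate_cont : Continuous (dilate φ t) :=
    continuous_const.mul (hφ.comp (continuous_const_smul _))
  have h_norm : (fun z => ‖dilate φ t z‖) = dilate (fun z => ‖φ z‖) t := by
    funext z
    simp only [dilate, norm_mul, Real.norm_of_nonneg (show 0 ≤ t⁻¹ ^ finrank ℝ E by positivity)]
  rw [← ofReal_integral_norm_eq_lintegral_enorm (h_dilate_cont.integrable_of_hasCompactSupport
      (hasCompactSupport_of_tsupport_subset_ball (tsupport_dilate_subset hφ_supp ht))),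
    ← ofReal_integral_norm_eq_lintegral_enorm (hφ.integrable_of_hasCompactSupport
      (hasCompactSupport_of_tsupport_subset_ball hφ_supp)), h_norm, integral_dilate μ _ ht]

namespace IsMollifier

variable {f h : E → ℝ} {β β' : ℝ≥0∞} {y : E}

lemma integral_dilate_eq_one (hφ : IsMollifier μ φ) (ht : 0 < t) : ∫ z, dilate φ t z ∂μ = 1 :=
  (integral_dilate μ φ ht).trans hφ.integral_eq_one

lemma lintegral_enorm_ne_top (hφ : IsMollifier μ φ) : ∫⁻ z, ‖φ z‖ₑ ∂μ ≠ ⊤ :=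
  (hφ.contDiff.continuous.integrable_of_hasCompactSupport
    (hasCompactSupport_of_tsupport_subset_ball hφ.tsupport_subset)).hasFiniteIntegral.ne

lemma enorm_convolution_sub_self_le (hφ : IsMollifier μ φ) (ht : 0 < t)
    (hh : LocallyIntegrable h μ) (hβ : ∀ z ∈ ball y t, ‖h z - h y‖ₑ ≤ β) :
    ‖(dilate φ t ⋆[mul ℝ ℝ, μ] h) y - h y‖ₑ ≤ (∫⁻ z, ‖φ z‖ₑ ∂μ) * β := by
  have h_sub := convolution_sub_integral_mul (hφ.continuous_dilate t)
    (hφ.hasCompactSupport_dilate ht) hh (h y) y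
  rw [hφ.integral_dilate_eq_one ht, one_mul] at h_sub
  rw [h_sub, ← lintegral_enorm_dilate hφ.contDiff.continuous hφ.tsupport_subset ht]
  exact enorm_convolution_le_lintegral_mul (hφ.continuous_dilate t)
    (hφ.support_dilate_subset ht) hβ

lemma tendsto_convolution_dyadicScale (hφ : IsMollifier μ φ) (hh : Continuous h) (y : E) :
    Tendsto (fun i => (dilate φ (dyadicScale i) ⋆[mul ℝ ℝ, μ] h) y) atTop (𝓝 (h y)) := by
  rw [EMetric.tendsto_nhds]
  intro ε hε
  obtain ⟨δ, hδ, hδε⟩ := ENNReal.exists_pos_mul_lt hφ.lintegral_enorm_ne_top hε.ne'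
  obtain ⟨ρ, hρ, h_ball⟩ := Metric.eventually_nhds_iff_ball.1
    (hh.continuousAt.eventually_mem (Metric.closedEBall_mem_nhds (h y) hδ))
  filter_upwards [tendsto_dyadicScale.eventually_lt_const hρ] with i hi
  refine lt_of_le_of_lt ?_ hδε
  rw [edist_eq_enorm_sub, mul_comm]
  refine hφ.enorm_convolution_sub_self_le (dyadicScale_pos i) hh.locallyIntegrable fun z hz => ?_
  rw [← edist_eq_enorm_sub]
  exact h_ball z (ball_subset_ball hi.le hz)

-- Compare both `u y` and `u' y` with the common value `(φ_s ⋆ u') y = (φ_t ⋆ u) y`.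
lemma enorm_sub_le_of_convolution_eq (hφ : IsMollifier μ φ) {s : ℝ} (hs : 0 < s) (ht : 0 < t)
    {u u' : E → ℝ} (hu : Continuous u) (hu' : Continuous u')
    (h_eq : dilate φ s ⋆[mul ℝ ℝ, μ] u' = dilate φ t ⋆[mul ℝ ℝ, μ] u)
    (hβ' : ∀ z ∈ ball y s, ‖u' z - u' y‖ₑ ≤ β') (hβ : ∀ z ∈ ball y t, ‖u z - u y‖ₑ ≤ β) :
    ‖u' y - u y‖ₑ ≤ (∫⁻ z, ‖φ z‖ₑ ∂μ) * (β' + β) :=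
  calc ‖u' y - u y‖ₑ
      ≤ ‖u' y - (dilate φ s ⋆[mul ℝ ℝ, μ] u') y‖ₑ + ‖(dilate φ t ⋆[mul ℝ ℝ, μ] u) y - u y‖ₑ := by
        rw [← h_eq]
        simpa only [edist_eq_enorm_sub] using edist_triangle (u' y) _ (u y)
    _ ≤ (∫⁻ z, ‖φ z‖ₑ ∂μ) * β' + (∫⁻ z, ‖φ z‖ₑ ∂μ) * β := by
        rw [enorm_sub_rev (u' y)]
        gcongr
        · exact hφ.enorm_convolution_sub_self_le hs hu'.locallyIntegrable hβ'
        · exact hφ.enorm_convolution_sub_self_le ht hu.locallyIntegrable hβ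
    _ = (∫⁻ z, ‖φ z‖ₑ ∂μ) * (β' + β) := (mul_add ..).symm

end IsMollifier

/-- The properties of the dyadic mollifications `v k = φ_{2⁻ᵏ} ⋆ u` of a distribution `u` of order
at most one that the maximal estimate needs: they are continuous, mollifying twice does not depend
on the order of the scales, and `v k` grows locally no faster than `2^(k (n + 1))`. -/
structure IsDyadicMollification (μ : Measure E) (φ : E → ℝ) (v : ℕ → E → ℝ) : Prop where
  continuous (k : ℕ) : Continuous (v k)
  convolution_swap (k i : ℕ) : dilate φ (dyadicScale k) ⋆[mul ℝ ℝ, μ] v i =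
    dilate φ (dyadicScale i) ⋆[mul ℝ ℝ, μ] v k
  exists_enorm_le (x : E) (R : ℝ) : ∃ K ≠ ⊤, ∀ k y, ball y (dyadicScale k) ⊆ ball x R →
    ENNReal.ofReal (dyadicScale k) ^ (finrank ℝ E + 1) * ‖v k y‖ₑ ≤ K

namespace IsDyadicMollification

variable {v : ℕ → E → ℝ} {A : ℝ} {k i : ℕ}

lemma continuous_convolution (hφ : IsMollifier μ φ) (hv : IsDyadicMollification μ φ v) (k i : ℕ) :
    Continuous (dilate φ (dyadicScale k) ⋆[mul ℝ ℝ, μ] v i) :=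
  (hφ.hasCompactSupport_dilate (dyadicScale_pos k)).continuous_convolution_left _
    (hφ.continuous_dilate _) (hv.continuous i).locallyIntegrable

lemma convolution_convolution_swap (hφ : IsMollifier μ φ) (hv : IsDyadicMollification μ φ v)
    (k i j : ℕ) :
    dilate φ (dyadicScale j) ⋆[mul ℝ ℝ, μ] (dilate φ (dyadicScale k) ⋆[mul ℝ ℝ, μ] v i) =
      dilate φ (dyadicScale i) ⋆[mul ℝ ℝ, μ] (dilate φ (dyadicScale k) ⋆[mul ℝ ℝ, μ] v j) := by
  have h_comm (a b c : ℕ) := convolution_convolution_left_comm (μ := μ)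
    (hφ.continuous_dilate (dyadicScale a)) (hφ.hasCompactSupport_dilate (dyadicScale_pos a))
    (hφ.continuous_dilate (dyadicScale b)) (hφ.hasCompactSupport_dilate (dyadicScale_pos b))
    (hv.continuous c).locallyIntegrable
  rw [h_comm j k i, hv.convolution_swap j i, h_comm k i j]

lemma enorm_convolution_sub_le (hφ : IsMollifier μ φ) (hv : IsDyadicMollification μ φ v)
    (hA : ∀ z, ‖fderiv ℝ φ z‖ ≤ A) (hi : k + 2 ≤ i) (j : ℕ) {y z : E}
    (hz : z ∈ ball y (dyadicScale i)) :
    ‖(dilate φ (dyadicScale k) ⋆[mul ℝ ℝ, μ] v j) z -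
        (dilate φ (dyadicScale k) ⋆[mul ℝ ℝ, μ] v j) y‖ₑ ≤
      ENNReal.ofReal (A * (dyadicScale k)⁻¹ ^ (finrank ℝ E + 1)) *
        (ENNReal.ofReal (dyadicScale i) *
          ∫⁻ s in ball y (5 / 4 * dyadicScale k), ‖v j s‖ₑ ∂μ) := by
  have hk := dyadicScale_pos k
  have hA₀ : 0 ≤ A := (norm_nonneg _).trans (hA 0)
  rw [← mul_assoc, ← ENNReal.ofReal_mul (by positivity)]
  refine (enorm_convolution_sub_convolution_le (hφ.continuous_dilate _)
    (hφ.hasCompactSupport_dilate hk) (hφ.support_dilate_subset hk)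
    (abs_dilate_sub_dilate_le hφ.contDiff hA hk) (by positivity)
    (hv.continuous j).locallyIntegrable (mem_ball_iff_norm.1 hz).le).trans ?_
  gcongr
  linarith [four_mul_dyadicScale_le hi]

variable (μ v) in
/-- The contribution `2⁻ⁱ ∫ |v i|` of the scale `i` to the estimate of `v k y`, with the integral
over a ball about `y` slightly larger than the scale `k`. -/
def scaledMass (y : E) (k i : ℕ) : ℝ≥0∞ :=
  ENNReal.ofReal (dyadicScale i) * ∫⁻ s in ball y (5 / 4 * dyadicScale k), ‖v i s‖ₑ ∂μ

lemma edist_convolution_succ_le (hφ : IsMollifier μ φ) (hv : IsDyadicMollification μ φ v)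
    (hA : ∀ z, ‖fderiv ℝ φ z‖ ≤ A) (hi : k + 2 ≤ i) (y : E) :
    edist ((dilate φ (dyadicScale k) ⋆[mul ℝ ℝ, μ] v i) y)
        ((dilate φ (dyadicScale k) ⋆[mul ℝ ℝ, μ] v (i + 1)) y) ≤
      ENNReal.ofReal (A * (dyadicScale k)⁻¹ ^ (finrank ℝ E + 1)) *
        (2 * (∫⁻ z, ‖φ z‖ₑ ∂μ) * (scaledMass μ v y k i + scaledMass μ v y k (i + 1))) := by
  set c := ENNReal.ofReal (A * (dyadicScale k)⁻¹ ^ (finrank ℝ E + 1))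
  have h_two : ENNReal.ofReal (dyadicScale i) = 2 * ENNReal.ofReal (dyadicScale (i + 1)) := by
    rw [← two_mul_dyadicScale_succ i, ENNReal.ofReal_mul zero_le_two, ENNReal.ofReal_ofNat]
  rw [edist_comm, edist_eq_enorm_sub]
  refine (hφ.enorm_sub_le_of_convolution_eq (dyadicScale_pos i) (dyadicScale_pos (i + 1))
    (hv.continuous_convolution hφ k i) (hv.continuous_convolution hφ k (i + 1))
    (hv.convolution_convolution_swap hφ k (i + 1) i)
    (fun z hz => hv.enorm_convolution_sub_le hφ hA hi (i + 1) hz)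
    (fun z hz => hv.enorm_convolution_sub_le hφ hA (by lia) i hz)).trans ?_
  set L := ∫⁻ z, ‖φ z‖ₑ ∂μ
  set N := fun j => ∫⁻ s in ball y (5 / 4 * dyadicScale k), ‖v j s‖ₑ ∂μ
  calc L * (c * (ENNReal.ofReal (dyadicScale i) * N (i + 1)) +
          c * (ENNReal.ofReal (dyadicScale (i + 1)) * N i))
      ≤ L * (c * (2 * ENNReal.ofReal (dyadicScale (i + 1)) * N (i + 1)) +
          c * (2 * ENNReal.ofReal (dyadicScale i) * N i)) := by
        rw [← h_two]
        gcongr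
        exact (ENNReal.ofReal_le_ofReal (antitone_dyadicScale i.le_succ)).trans
          (le_mul_of_one_le_left' one_le_two)
    _ = c * (2 * L * (scaledMass μ v y k i + scaledMass μ v y k (i + 1))) := by
        simp only [scaledMass, N]
        ring

lemma enorm_convolution_le_scaledMass (hφ : IsMollifier μ φ) (hA : ∀ z, |φ z| ≤ A) (y : E) :
    ‖(dilate φ (dyadicScale k) ⋆[mul ℝ ℝ, μ] v (k + 2)) y‖ₑ ≤
      ENNReal.ofReal (A * (dyadicScale k)⁻¹ ^ (finrank ℝ E + 1)) *
        (4 * scaledMass μ v y k (k + 2)) := by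
  have hk := dyadicScale_pos k
  have hA₀ : 0 ≤ A := (abs_nonneg _).trans (hA 0)
  refine (enorm_convolution_le_mul_setLIntegral (hφ.support_dilate_subset hk)
    (abs_dilate_le hA hk) _ y).trans ?_
  have h_four : A * (dyadicScale k)⁻¹ ^ finrank ℝ E =
      A * (dyadicScale k)⁻¹ ^ (finrank ℝ E + 1) * (4 * dyadicScale (k + 2)) := by
    rw [four_mul_dyadicScale_add_two, pow_succ]
    field_simp
  rw [scaledMass, h_four, ENNReal.ofReal_mul (by positivity), ENNReal.ofReal_mul zero_le_four,
    ENNReal.ofReal_ofNat, mul_assoc, mul_assoc]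
  gcongr
  linarith

lemma enorm_le_tsum_scaledMass (hφ : IsMollifier μ φ) (hv : IsDyadicMollification μ φ v)
    (hA : ∀ z, |φ z| ≤ A) (hA' : ∀ z, ‖fderiv ℝ φ z‖ ≤ A) (k : ℕ) (y : E) :
    ‖v k y‖ₑ ≤ ENNReal.ofReal (A * (dyadicScale k)⁻¹ ^ (finrank ℝ E + 1)) *
      ((4 + 4 * ∫⁻ z, ‖φ z‖ₑ ∂μ) * ∑' i, scaledMass μ v y k (k + 2 + i)) := by
  set c := ENNReal.ofReal (A * (dyadicScale k)⁻¹ ^ (finrank ℝ E + 1))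
  set L := ∫⁻ z, ‖φ z‖ₑ ∂μ
  set a := fun i => scaledMass μ v y k (k + 2 + i)
  set w := fun i => (dilate φ (dyadicScale k) ⋆[mul ℝ ℝ, μ] v (k + 2 + i)) y
  have hw : Tendsto w atTop (𝓝 (v k y)) := by
    simp only [w, hv.convolution_swap k]
    exact (hφ.tendsto_convolution_dyadicScale (hv.continuous k) y).comp
      (tendsto_add_atTop_nat (k + 2) |>.congr fun i => add_comm _ _)
  have h_tail : edist (w 0) (v k y) ≤ ∑' i, c * (2 * L * (a i + a (i + 1))) :=
    edist_le_tsum_of_edist_le_of_tendsto₀ _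
      (fun i => hv.edist_convolution_succ_le hφ hA' (Nat.le_add_right (k + 2) i) y) hw
  have h_shift : ∑' i, a (i + 1) ≤ ∑' i, a i := ENNReal.tsum_comp_le_tsum_of_injective
    (add_left_injective 1) a
  calc ‖v k y‖ₑ ≤ ‖w 0‖ₑ + edist (w 0) (v k y) := by
        simpa only [edist_zero_right, edist_comm (v k y) (w 0), add_comm] using
          edist_triangle (v k y) (w 0) 0
    _ ≤ c * (4 * ∑' i, a i) + c * (2 * L * (∑' i, a i + ∑' i, a i)) := by
        rw [ENNReal.tsum_mul_left, ENNReal.tsum_mul_left, ENNReal.tsum_add] at h_tail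
        gcongr
        · refine (enorm_convolution_le_scaledMass hφ hA y).trans ?_
          gcongr
          exact ENNReal.le_tsum 0
        · exact h_tail.trans (by gcongr)
    _ = c * ((4 + 4 * L) * ∑' i, a i) := by ring

end IsDyadicMollification

end DyadicMollification

section MaximalEstimate

open Module (finrank)

lemma rpow_le_of_le_mul_rpow_one_sub {S X : ℝ≥0∞} {r : ℝ} (hr : 0 < r) (hS : S ≠ ⊤)
    (h : S ≤ X * S ^ (1 - r)) : S ^ r ≤ X := by
  obtain rfl | hS₀ := eq_or_ne S 0
  · simp [hr]
  have h_pow : S ^ (1 - r) ≠ 0 := by simp [hS₀, hS]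
  refine (ENNReal.mul_le_mul_iff_left h_pow (by simp [hS₀, hS])).1 ?_
  rwa [← ENNReal.rpow_add _ _ hS₀ hS, add_sub_cancel, ENNReal.rpow_one]

lemma setLIntegral_le_rpow_mul_setLIntegral_rpow {α : Type*} [MeasurableSpace α] {μ : Measure α}
    {s : Set α} (hs : MeasurableSet s) {h : α → ℝ≥0∞} {M : ℝ≥0∞} (hM : M ≠ ⊤)
    (h_le : ∀ x ∈ s, h x ≤ M) {r : ℝ} (hr : 0 ≤ r) (hr₁ : r ≤ 1) :
    ∫⁻ x in s, h x ∂μ ≤ M ^ (1 - r) * ∫⁻ x in s, h x ^ r ∂μ := by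
  have hr' : 0 ≤ 1 - r := sub_nonneg.2 hr₁
  rw [← lintegral_const_mul' _ _ (rpow_ne_top_of_nonneg hr' hM)]
  refine setLIntegral_mono' hs fun x hx => ?_
  calc h x = h x ^ (1 - r) * h x ^ r := by
        rw [← ENNReal.rpow_add_of_nonneg _ _ hr' hr, sub_add_cancel, ENNReal.rpow_one]
    _ ≤ M ^ (1 - r) * h x ^ r := by
        gcongr
        exact h_le x hx

lemma ofReal_dyadicScale (k : ℕ) : ENNReal.ofReal (dyadicScale k) = (2 ^ k)⁻¹ := by
  rw [dyadicScale, ENNReal.ofReal_pow (by norm_num), ENNReal.ofReal_inv_of_pos zero_lt_two,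
    ENNReal.ofReal_ofNat, ENNReal.inv_pow]

lemma ofReal_dyadicScale_rpow (k : ℕ) (s : ℝ) :
    ENNReal.ofReal (dyadicScale k) ^ s = ((2⁻¹ : ℝ≥0∞) ^ s) ^ k := by
  rw [ofReal_dyadicScale, ENNReal.inv_pow, ← ENNReal.rpow_natCast, ← ENNReal.rpow_natCast,
    ← ENNReal.rpow_mul, ← ENNReal.rpow_mul, mul_comm]

lemma ofReal_dyadicScale_ne_zero (k : ℕ) : ENNReal.ofReal (dyadicScale k) ≠ 0 :=
  (ENNReal.ofReal_pos.2 (dyadicScale_pos k)).ne'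

variable {E : Type*} [NormedAddCommGroup E] [NormedSpace ℝ E] {v : ℕ → E → ℝ} {x y : E}
  {k l i : ℕ}

variable (v) in
/-- The supremum of `2^(-k (n + 1)) |v k y|` over all `k ≥ l` and all `y` whose ball of radius
`2 · 2⁻ᵏ` lies in the ball of radius `2 · 2⁻ˡ` about `x`; it satisfies a
self-improving bound `S ≤ X S^(1 - r)`. -/
def scaledSup (x : E) (l : ℕ) : ℝ≥0∞ :=
  ⨆ (k) (y) (_ : l ≤ k) (_ : ball y (2 * dyadicScale k) ⊆ ball x (2 * dyadicScale l)),
    ENNReal.ofReal (dyadicScale k) ^ (finrank ℝ E + 1) * ‖v k y‖ₑ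

lemma mul_enorm_le_scaledSup (hk : l ≤ k)
    (hy : ball y (2 * dyadicScale k) ⊆ ball x (2 * dyadicScale l)) :
    ENNReal.ofReal (dyadicScale k) ^ (finrank ℝ E + 1) * ‖v k y‖ₑ ≤ scaledSup v x l :=
  le_iSup₂_of_le k y (le_iSup₂_of_le hk hy le_rfl)

lemma enorm_le_mul_scaledSup (hk : l ≤ k)
    (hy : ball y (2 * dyadicScale k) ⊆ ball x (2 * dyadicScale l)) :
    ‖v k y‖ₑ ≤ scaledSup v x l * (ENNReal.ofReal (dyadicScale k) ^ (finrank ℝ E + 1))⁻¹ := by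
  rw [← div_eq_mul_inv, ENNReal.le_div_iff_mul_le
    (.inl (pow_ne_zero _ (ofReal_dyadicScale_ne_zero k))) (.inl (by finiteness)), mul_comm]
  exact mul_enorm_le_scaledSup hk hy

variable [MeasurableSpace E] {μ : Measure E} {φ : E → ℝ} {r A : ℝ} {J : ℝ≥0∞}

namespace IsDyadicMollification

lemma scaledSup_ne_top (hv : IsDyadicMollification μ φ v) (x : E) (l : ℕ) :
    scaledSup v x l ≠ ⊤ := by
  obtain ⟨K, hK, h_le⟩ := hv.exists_enorm_le x (2 * dyadicScale l)
  refine ne_top_of_le_ne_top hK (iSup₂_le fun k y => iSup₂_le fun _ hy => h_le k y ?_)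
  exact (ball_subset_ball (by linarith [dyadicScale_pos k])).trans hy

variable [BorelSpace E]

-- Splitting `|v i| = |v i|^(1 - r) |v i|^r`, the first factor costs `2^(i (n + 1) (1 - r))`, which
-- is less than the gain `2⁻ⁱ`.
lemma scaledMass_le (hr : 0 ≤ r) (hr₁ : r ≤ 1) (hS : scaledSup v x l ≠ ⊤)
    (hJ : ∀ i, ∫⁻ s in ball x (2 * dyadicScale l), ‖v i s‖ₑ ^ r ∂μ ≤ J) (hk : l ≤ k)
    (hy : ball y (2 * dyadicScale k) ⊆ ball x (2 * dyadicScale l)) (hi : k + 2 ≤ i) :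
    scaledMass μ v y k i ≤
      scaledSup v x l ^ (1 - r) * J * ((2⁻¹ : ℝ≥0∞) ^ (1 - (finrank ℝ E + 1) * (1 - r))) ^ i := by
  set S := scaledSup v x l
  set T := ENNReal.ofReal (dyadicScale i) with hT
  set N := finrank ℝ E + 1 with hN
  have hT₀ : T ≠ 0 := ofReal_dyadicScale_ne_zero i
  have hT_top : T ≠ ⊤ := ofReal_ne_top
  have h_scale := four_mul_dyadicScale_le hi
  have hk_pos := dyadicScale_pos k
  have h_le (z : E) (hz : z ∈ ball y (5 / 4 * dyadicScale k)) : ‖v i z‖ₑ ≤ S * (T ^ N)⁻¹ :=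
    enorm_le_mul_scaledSup (by lia) ((ball_subset_ball' (by linarith [mem_ball.1 hz])).trans hy)
  have h_mass : ∫⁻ s in ball y (5 / 4 * dyadicScale k), ‖v i s‖ₑ ^ r ∂μ ≤ J :=
    (lintegral_mono_set ((ball_subset_ball (by linarith)).trans hy)).trans (hJ i)
  have h_exp : T * ((T ^ N)⁻¹) ^ (1 - r) = T ^ (1 - (finrank ℝ E + 1) * (1 - r)) := by
    rw [← ENNReal.rpow_natCast, ← ENNReal.rpow_neg, ← ENNReal.rpow_mul]
    nth_rewrite 1 [← ENNReal.rpow_one T]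
    rw [← ENNReal.rpow_add _ _ hT₀ hT_top, hN]
    push_cast
    ring_nf
  calc scaledMass μ v y k i ≤ T * ((S * (T ^ N)⁻¹) ^ (1 - r) * J) := by
        rw [scaledMass]
        gcongr
        refine (setLIntegral_le_rpow_mul_setLIntegral_rpow measurableSet_ball
          (by finiteness) h_le hr hr₁).trans ?_
        gcongr
    _ = S ^ (1 - r) * J * (T * ((T ^ N)⁻¹) ^ (1 - r)) := by
        rw [ENNReal.mul_rpow_of_nonneg _ _ (sub_nonneg.2 hr₁)]
        ring
    _ = _ := by rw [h_exp, hT, ofReal_dyadicScale_rpow]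

variable [FiniteDimensional ℝ E] [μ.IsAddHaarMeasure]

lemma mul_enorm_le_tsum_scaledMass (hφ : IsMollifier μ φ) (hv : IsDyadicMollification μ φ v)
    (hA : ∀ z, |φ z| ≤ A) (hA' : ∀ z, ‖fderiv ℝ φ z‖ ≤ A) (k : ℕ) (y : E) :
    ENNReal.ofReal (dyadicScale k) ^ (finrank ℝ E + 1) * ‖v k y‖ₑ ≤
      ENNReal.ofReal A * (4 + 4 * ∫⁻ z, ‖φ z‖ₑ ∂μ) * ∑' i, scaledMass μ v y k (k + 2 + i) := by
  have hk := dyadicScale_pos k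
  refine (mul_le_mul_right (hv.enorm_le_tsum_scaledMass hφ hA hA' k y) _).trans_eq ?_
  rw [← ENNReal.ofReal_pow hk.le, ← mul_assoc, ← ENNReal.ofReal_mul (by positivity),
    mul_left_comm _ A, ← mul_pow, mul_inv_cancel₀ hk.ne', one_pow, mul_one, mul_assoc]

lemma scaledSup_le_mul_rpow_one_sub (hφ : IsMollifier μ φ) (hv : IsDyadicMollification μ φ v)
    (hA : ∀ z, |φ z| ≤ A) (hA' : ∀ z, ‖fderiv ℝ φ z‖ ≤ A) (hr : 0 ≤ r) (hr₁ : r ≤ 1)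
    (hJ : ∀ i, ∫⁻ s in ball x (2 * dyadicScale l), ‖v i s‖ₑ ^ r ∂μ ≤ J) {b : ℝ≥0∞}
    (hb : b = 2⁻¹ ^ (1 - (finrank ℝ E + 1) * (1 - r))) (hb₁ : b ≤ 1) :
    scaledSup v x l ≤ ENNReal.ofReal A * (4 + 4 * ∫⁻ z, ‖φ z‖ₑ ∂μ) * (1 - b)⁻¹ * J * b ^ l *
      scaledSup v x l ^ (1 - r) := by
  set S := scaledSup v x l
  set B := ENNReal.ofReal A * (4 + 4 * ∫⁻ z, ‖φ z‖ₑ ∂μ)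
  refine iSup₂_le fun k y => iSup₂_le fun hk hy => ?_
  calc ENNReal.ofReal (dyadicScale k) ^ (finrank ℝ E + 1) * ‖v k y‖ₑ
      ≤ B * ∑' i, scaledMass μ v y k (k + 2 + i) :=
        hv.mul_enorm_le_tsum_scaledMass hφ hA hA' k y
    _ ≤ B * ∑' i, S ^ (1 - r) * J * b ^ l * b ^ i := by
        gcongr with i
        refine (scaledMass_le hr hr₁ (hv.scaledSup_ne_top x l) hJ hk hy (by lia)).trans ?_
        rw [← hb, mul_assoc _ (b ^ l), ← pow_add]
        exact mul_le_mul_right (pow_right_anti₀ zero_le hb₁ (by lia)) _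
    _ = B * (1 - b)⁻¹ * J * b ^ l * S ^ (1 - r) := by
        rw [ENNReal.tsum_mul_left, ENNReal.tsum_geometric]
        ring

lemma exists_mul_enorm_rpow_le (hφ : IsMollifier μ φ) (hr : 0 < r) (hr₁ : r ≤ 1)
    (hnr : finrank ℝ E * (1 - r) < r) :
    ∃ C ≠ ⊤, ∀ {v : ℕ → E → ℝ}, IsDyadicMollification μ φ v → ∀ (x : E) (l : ℕ) {J : ℝ≥0∞},
      (∀ i, ∫⁻ s in ball x (2 * dyadicScale l), ‖v i s‖ₑ ^ r ∂μ ≤ J) →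
      ENNReal.ofReal (dyadicScale l) ^ finrank ℝ E * ‖v l x‖ₑ ^ r ≤ C * J := by
  obtain ⟨A, -, hA, hA'⟩ := exists_abs_le_and_norm_fderiv_le hφ.contDiff hφ.tsupport_subset
  set ε : ℝ := 1 - (finrank ℝ E + 1) * (1 - r) with hε
  have hε_pos : 0 < ε := by linarith
  set b : ℝ≥0∞ := 2⁻¹ ^ ε
  have hb : b < 1 := ENNReal.rpow_lt_one (by simp) hε_pos
  set C := ENNReal.ofReal A * (4 + 4 * ∫⁻ z, ‖φ z‖ₑ ∂μ) * (1 - b)⁻¹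
  have hC : C ≠ ⊤ := by
    have := hφ.lintegral_enorm_ne_top
    have := (tsub_pos_of_lt hb).ne'
    finiteness
  refine ⟨C, hC, fun {v} hv x l {J} hJ => ?_⟩
  set T := ENNReal.ofReal (dyadicScale l) with hT
  have hT₀ : T ≠ 0 := ofReal_dyadicScale_ne_zero l
  have hT_top : T ≠ ⊤ := ofReal_ne_top
  have h_exp : (T ^ (finrank ℝ E + 1)) ^ r = T ^ ε * T ^ finrank ℝ E := by
    rw [← ENNReal.rpow_natCast, ← ENNReal.rpow_natCast, ← ENNReal.rpow_mul,
      ← ENNReal.rpow_add _ _ hT₀ hT_top, hε]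
    push_cast
    ring_nf
  have hT_pow : T ^ ε ≠ 0 := by simp [hT₀, hT_top]
  refine (ENNReal.mul_le_mul_iff_right hT_pow (by finiteness)).1 ?_
  calc T ^ ε * (T ^ finrank ℝ E * ‖v l x‖ₑ ^ r)
      = (T ^ (finrank ℝ E + 1) * ‖v l x‖ₑ) ^ r := by
        rw [ENNReal.mul_rpow_of_nonneg _ _ hr.le, h_exp, mul_assoc]
    _ ≤ scaledSup v x l ^ r := by
        gcongr
        exact mul_enorm_le_scaledSup le_rfl subset_rfl
    _ ≤ C * J * b ^ l := rpow_le_of_le_mul_rpow_one_sub hr (hv.scaledSup_ne_top x l)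
        (hv.scaledSup_le_mul_rpow_one_sub hφ hA hA' hr.le hr₁ hJ rfl hb.le)
    _ = T ^ ε * (C * J) := by rw [hT, ofReal_dyadicScale_rpow, mul_comm]

lemma exists_enorm_le_hardyLittlewoodMax (hφ : IsMollifier μ φ) (hr : 0 < r) (hr₁ : r ≤ 1)
    (hnr : finrank ℝ E * (1 - r) < r) :
    ∃ C ≠ ⊤, ∀ {v : ℕ → E → ℝ} {m : E → ℝ≥0∞}, IsDyadicMollification μ φ v →
      (∀ k y, ‖v k y‖ₑ ≤ m y) → ∀ {k : ℕ} {x z : E}, ‖z - x‖ ≤ 4 * dyadicScale k →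
      ‖v k z‖ₑ ≤ C * hardyLittlewoodMax μ (fun y => m y ^ r) x ^ (1 / r) := by
  obtain ⟨C, hC, h_core⟩ := exists_mul_enorm_rpow_le hφ hr hr₁ hnr
  set D := C * (5 ^ finrank ℝ E * μ (ball 0 1))
  have hD : D ≠ ⊤ := mul_ne_top hC (mul_ne_top (by finiteness) measure_ball_lt_top.ne)
  refine ⟨D ^ (1 / r), rpow_ne_top_of_nonneg (by positivity) hD,
    fun {v m} hv hm {k x z} hz => ?_⟩
  set M := hardyLittlewoodMax μ (fun y => m y ^ r) x
  set T := ENNReal.ofReal (dyadicScale k)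
  have hk := dyadicScale_pos k
  have hx : x ∈ ball z (5 * dyadicScale k) := by
    rw [mem_ball_iff_norm, norm_sub_rev]
    linarith
  have h_vol : μ (ball z (5 * dyadicScale k)) =
      T ^ finrank ℝ E * (5 ^ finrank ℝ E * μ (ball 0 1)) := by
    rw [Measure.addHaar_ball_of_pos μ z (by positivity), mul_pow,
      ENNReal.ofReal_mul (by positivity), ENNReal.ofReal_pow (by positivity),
      ENNReal.ofReal_pow hk.le, ENNReal.ofReal_ofNat]
    ring
  have h_mass (i : ℕ) : ∫⁻ s in ball z (2 * dyadicScale k), ‖v i s‖ₑ ^ r ∂μ ≤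
      μ (ball z (5 * dyadicScale k)) * M :=
    calc ∫⁻ s in ball z (2 * dyadicScale k), ‖v i s‖ₑ ^ r ∂μ
        ≤ ∫⁻ s in ball z (5 * dyadicScale k), m s ^ r ∂μ := by
          gcongr with s
          · linarith
          · exact hm i s
      _ ≤ μ (ball z (5 * dyadicScale k)) * M := setLIntegral_ball_le_mul_hardyLittlewoodMax _ hx
  have h_rpow : ‖v k z‖ₑ ^ r ≤ D * M := by
    refine (ENNReal.mul_le_mul_iff_right (pow_ne_zero (finrank ℝ E) (ofReal_dyadicScale_ne_zero k))
      (by finiteness)).1 ((h_core hv z k h_mass).trans_eq ?_)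
    rw [h_vol]
    ring
  rwa [← ENNReal.mul_rpow_of_nonneg _ _ (by positivity), one_div, ENNReal.le_rpow_inv_iff hr]

end IsDyadicMollification

end MaximalEstimate

section PointwiseReconstruction

open Filter Topology
open Module (finrank)
open ContinuousLinearMap (mul)
open scoped Convolution

lemma exists_le_dyadicScale_le_two_mul {s : ℝ} (hs : 0 < s) (hs₁ : s ≤ 1) :
    ∃ l, s ≤ dyadicScale l ∧ dyadicScale l ≤ 2 * s := by
  obtain ⟨l, hl_lt, hl_le⟩ :=
    exists_nat_pow_near_of_lt_one hs hs₁ (y := (2⁻¹ : ℝ)) (by norm_num) (by norm_num)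
  refine ⟨l, hl_le, ?_⟩
  rw [← two_mul_dyadicScale_succ l]
  exact mul_le_mul_of_nonneg_left hl_lt.le zero_le_two

lemma enorm_sub_le_of_enorm_fderiv_le {F G : Type*} [NormedAddCommGroup F] [NormedSpace ℝ F]
    [NormedAddCommGroup G] [NormedSpace ℝ G] {u : F → G} (hu : Differentiable ℝ u) {s : Set F}
    (hs : Convex ℝ s) {D : ℝ≥0∞} (hD : ∀ z ∈ s, ‖fderiv ℝ u z‖ₑ ≤ D) {x y : F} (hx : x ∈ s)
    (hy : y ∈ s) : ‖u x - u y‖ₑ ≤ D * ‖x - y‖ₑ := by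
  obtain rfl | hD_top := eq_or_ne D ⊤
  · obtain rfl | hxy := eq_or_ne x y
    · simp
    · simp [ENNReal.top_mul (enorm_ne_zero.2 (sub_ne_zero.2 hxy))]
  lift D to ℝ≥0 using hD_top
  simpa only [edist_eq_enorm_sub] using hs.lipschitzOnWith_of_nnnorm_fderiv_le
    (fun z _ => hu z) (fun z hz => ENNReal.coe_le_coe.1 (hD z hz)) hx hy

variable {E : Type*} [NormedAddCommGroup E] [NormedSpace ℝ E] [MeasurableSpace E]

/-- The mollification of `f` at scale `2⁻ᵏ`. -/
def dyadicMollify (μ : Measure E) (φ f : E → ℝ) (k : ℕ) : E → ℝ :=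
  dilate φ (dyadicScale k) ⋆[mul ℝ ℝ, μ] f

variable [BorelSpace E] [FiniteDimensional ℝ E] {μ : Measure E} [μ.IsAddHaarMeasure]
  {φ f : E → ℝ} {x y : E} {D : ℝ≥0∞} {k : ℕ}

namespace IsMollifier

lemma isDyadicMollification_mollifiedDeriv (hφ : IsMollifier μ φ) (hf : LocallyIntegrable f μ)
    (e : E) : IsDyadicMollification μ φ fun k => mollifiedDeriv μ φ f e (dyadicScale k) where
  continuous k :=
    continuous_mollifiedDeriv hφ.contDiff hφ.tsupport_subset hf (dyadicScale_pos k)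
  convolution_swap k i :=
    convolution_fderiv_convolution_swap (contDiff_dilate hφ.contDiff _)
      (hφ.hasCompactSupport_dilate (dyadicScale_pos k)) (contDiff_dilate hφ.contDiff _)
      (hφ.hasCompactSupport_dilate (dyadicScale_pos i)) hf e
  exists_enorm_le x R := by
    obtain ⟨A, -, -, hA⟩ := exists_abs_le_and_norm_fderiv_le hφ.contDiff hφ.tsupport_subset
    have h_int : IntegrableOn f (ball x R) μ :=
      (hf.integrableOn_isCompact (isCompact_closedBall x R)).mono_set ball_subset_closedBall
    refine ⟨ENNReal.ofReal (A * ‖e‖) * ∫⁻ y in ball x R, ‖f y‖ₑ ∂μ,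
      mul_ne_top ofReal_ne_top h_int.2.ne, fun k y hy => ?_⟩
    have hk := dyadicScale_pos k
    have h_bound := enorm_mollifiedDeriv_le_mul_setLIntegral hφ.contDiff hφ.tsupport_subset hA hf
      hk e 0 y
    simp only [sub_zero] at h_bound
    refine (mul_le_mul_right h_bound _).trans ?_
    rw [← ENNReal.ofReal_pow hk.le, ← mul_assoc, ← ENNReal.ofReal_mul (by positivity),
      mul_right_comm A, mul_left_comm, ← mul_pow, mul_inv_cancel₀ hk.ne', one_pow, mul_one]
    gcongr

lemma differentiable_dyadicMollify (hφ : IsMollifier μ φ) (hf : LocallyIntegrable f μ) (k : ℕ) :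
    Differentiable ℝ (dyadicMollify μ φ f k) :=
  differentiable_convolution_left (contDiff_dilate hφ.contDiff _)
    (hφ.hasCompactSupport_dilate (dyadicScale_pos k)) hf

lemma fderiv_dyadicMollify_apply (hφ : IsMollifier μ φ) (hf : LocallyIntegrable f μ) (k : ℕ)
    (x e : E) :
    fderiv ℝ (dyadicMollify μ φ f k) x e = mollifiedDeriv μ φ f e (dyadicScale k) x :=
  fderiv_convolution_left_apply (contDiff_dilate hφ.contDiff _)
    (hφ.hasCompactSupport_dilate (dyadicScale_pos k)) hf x e

lemma ae_tendsto_dyadicMollify (hφ : IsMollifier μ φ) (hf : LocallyIntegrable f μ) :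
    ∀ᵐ x ∂μ, Tendsto (fun k => dyadicMollify μ φ f k x) atTop (𝓝 (f x)) := by
  obtain ⟨A, -, hA, -⟩ := exists_abs_le_and_norm_fderiv_le hφ.contDiff hφ.tsupport_subset
  filter_upwards [(Besicovitch.vitaliFamily μ).ae_tendsto_average_norm_sub hf] with x hx
  have h_scale : Tendsto dyadicScale atTop (𝓝[>] 0) :=
    tendsto_nhdsWithin_iff.2 ⟨tendsto_dyadicScale, .of_forall dyadicScale_pos⟩
  simp only [dyadicMollify, convolution_mul_swap]
  refine tendsto_integral_smul_of_tendsto_average_norm_sub (A * μ.real (ball 0 1))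
    ((hx.comp (Besicovitch.tendsto_filterAt μ x)).comp h_scale)
    (.of_forall fun k => hf.integrableOn_isCompact (isCompact_closedBall _ _)) ?_
    (.of_forall fun k => ?_) (.of_forall fun k y => ?_)
  · simp only [integral_sub_left_eq_self _ μ x, hφ.integral_dilate_eq_one (dyadicScale_pos _),
      tendsto_const_nhds]
  · intro y hy
    by_contra hy'
    exact hy (apply_sub_eq_zero_of_notMem_ball (hφ.support_dilate_subset (dyadicScale_pos k))
      fun h => hy' (ball_subset_closedBall h))
  · have hk := dyadicScale_pos k
    have h_vol : 0 < μ.real (ball (0 : E) 1) :=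
      ENNReal.toReal_pos (measure_ball_pos μ 0 one_pos).ne' measure_ball_lt_top.ne
    refine (abs_dilate_le hA hk _).trans_eq ?_
    simp only [Measure.addHaar_real_closedBall μ x hk.le, inv_pow]
    field_simp

lemma enorm_dyadicMollify_sub_le (hφ : IsMollifier μ φ) (hf : LocallyIntegrable f μ)
    (hD : ∀ z, ‖z - x‖ ≤ 4 * dyadicScale k → ‖fderiv ℝ (dyadicMollify μ φ f k) z‖ₑ ≤ D)
    {z : E} (hz : ‖z - x‖ ≤ 4 * dyadicScale k) :
    ‖dyadicMollify μ φ f k z - dyadicMollify μ φ f k x‖ₑ ≤ D * ‖z - x‖ₑ :=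
  enorm_sub_le_of_enorm_fderiv_le (hφ.differentiable_dyadicMollify hf k)
    (convex_closedBall x (4 * dyadicScale k)) (fun z hz => hD z (mem_closedBall_iff_norm.1 hz))
    (mem_closedBall_iff_norm.2 hz)
    (mem_closedBall_self (by linarith [dyadicScale_pos k]))

lemma edist_dyadicMollify_succ_le (hφ : IsMollifier μ φ) (hf : LocallyIntegrable f μ)
    (hD : ∀ k z, ‖z - x‖ ≤ 4 * dyadicScale k → ‖fderiv ℝ (dyadicMollify μ φ f k) z‖ₑ ≤ D)
    (k : ℕ) :
    edist (dyadicMollify μ φ f k x) (dyadicMollify μ φ f (k + 1) x) ≤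
      2 * (∫⁻ z, ‖φ z‖ₑ ∂μ) * D / 2 ^ k := by
  have hk := dyadicScale_pos k
  have h_two := two_mul_dyadicScale_succ k
  have h_osc (i : ℕ) (hi : dyadicScale k ≤ 4 * dyadicScale i) (z : E)
      (hz : z ∈ ball x (dyadicScale k)) :
      ‖dyadicMollify μ φ f i z - dyadicMollify μ φ f i x‖ₑ ≤ D * (2 ^ k)⁻¹ := by
    have hz' := (mem_ball_iff_norm.1 hz).le
    refine (hφ.enorm_dyadicMollify_sub_le hf (hD i) (hz'.trans hi)).trans ?_
    rw [← ofReal_dyadicScale, ← ofReal_norm]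
    gcongr
  have h_cont (i : ℕ) : Continuous (dyadicMollify μ φ f i) :=
    (hφ.differentiable_dyadicMollify hf i).continuous
  rw [edist_comm, edist_eq_enorm_sub]
  refine (hφ.enorm_sub_le_of_convolution_eq hk (dyadicScale_pos (k + 1)) (h_cont k) (h_cont (k + 1))
    (convolution_convolution_left_comm (hφ.continuous_dilate _) (hφ.hasCompactSupport_dilate hk)
      (hφ.continuous_dilate _) (hφ.hasCompactSupport_dilate (dyadicScale_pos _)) hf)
    (h_osc (k + 1) (by linarith)) fun z hz =>
      h_osc k (by linarith) z (ball_subset_ball (by linarith) hz)).trans_eq ?_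
  rw [div_eq_mul_inv]
  ring

lemma edist_dyadicMollify_le (hφ : IsMollifier μ φ) (hf : LocallyIntegrable f μ)
    (hD : ∀ k z, ‖z - x‖ ≤ 4 * dyadicScale k → ‖fderiv ℝ (dyadicMollify μ φ f k) z‖ₑ ≤ D)
    (hx : Tendsto (fun k => dyadicMollify μ φ f k x) atTop (𝓝 (f x))) (l : ℕ) :
    edist (dyadicMollify μ φ f l x) (f x) ≤
      4 * (∫⁻ z, ‖φ z‖ₑ ∂μ) * D * ENNReal.ofReal (dyadicScale l) := by
  refine (edist_le_of_edist_le_geometric_two_of_tendsto _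
    (hφ.edist_dyadicMollify_succ_le hf hD) hx l).trans_eq ?_
  rw [ofReal_dyadicScale, div_eq_mul_inv]
  ring

lemma enorm_sub_le_of_enorm_fderiv_dyadicMollify_le (hφ : IsMollifier μ φ)
    (hf : LocallyIntegrable f μ) {D : E → ℝ≥0∞}
    (hD : ∀ x k z, ‖z - x‖ ≤ 4 * dyadicScale k → ‖fderiv ℝ (dyadicMollify μ φ f k) z‖ₑ ≤ D x)
    (hx : Tendsto (fun k => dyadicMollify μ φ f k x) atTop (𝓝 (f x)))
    (hy : Tendsto (fun k => dyadicMollify μ φ f k y) atTop (𝓝 (f y))) (hxy : ‖x - y‖ ≤ 1) :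
    ‖f x - f y‖ₑ ≤ (8 * (∫⁻ z, ‖φ z‖ₑ ∂μ) + 1) * (‖x - y‖ₑ * (D x + D y)) := by
  obtain rfl | hne := eq_or_ne x y
  · simp
  obtain ⟨l, hl, hl'⟩ :=
    exists_le_dyadicScale_le_two_mul (norm_pos_iff.2 (sub_ne_zero.2 hne)) hxy
  set u := dyadicMollify μ φ f l
  set L := ∫⁻ z, ‖φ z‖ₑ ∂μ
  have h_scale : ENNReal.ofReal (dyadicScale l) ≤ 2 * ‖x - y‖ₑ := by
    rw [← ofReal_norm, ← ENNReal.ofReal_ofNat, ← ENNReal.ofReal_mul zero_le_two]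
    exact ENNReal.ofReal_le_ofReal hl'
  have h_close {w : E} (hw : Tendsto (fun k => dyadicMollify μ φ f k w) atTop (𝓝 (f w))) :
      edist (u w) (f w) ≤ 4 * L * D w * (2 * ‖x - y‖ₑ) :=
    (hφ.edist_dyadicMollify_le hf (hD w) hw l).trans (by gcongr)
  have h_lip : edist (u x) (u y) ≤ D y * ‖x - y‖ₑ := by
    rw [edist_eq_enorm_sub]
    exact hφ.enorm_dyadicMollify_sub_le hf (hD y l) (by linarith)
  calc ‖f x - f y‖ₑ ≤ edist (u x) (f x) + edist (u x) (u y) + edist (u y) (f y) := by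
        rw [← edist_eq_enorm_sub, edist_comm (u x) (f x)]
        exact edist_triangle4 _ _ _ _
    _ ≤ 4 * L * D x * (2 * ‖x - y‖ₑ) + (D x + D y) * ‖x - y‖ₑ +
          4 * L * D y * (2 * ‖x - y‖ₑ) := by
        gcongr
        · exact h_close hx
        · exact h_lip.trans (by gcongr; exact le_add_self)
        · exact h_close hy
    _ = (8 * L + 1) * (‖x - y‖ₑ * (D x + D y)) := by ring

end IsMollifier

end PointwiseReconstruction

section OrthonormalDerivatives

open Filter Topology
open Module (finrank)

variable {ι E : Type*} [Fintype ι] [NormedAddCommGroup E] [InnerProductSpace ℝ E]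

lemma enorm_clm_le_sum_enorm_apply_orthonormalBasis {F : Type*} [NormedAddCommGroup F]
    [NormedSpace ℝ F] (b : OrthonormalBasis ι ℝ E) (T : E →L[ℝ] F) : ‖T‖ₑ ≤ ∑ i, ‖T (b i)‖ₑ := by
  have h_norm : ‖T‖ ≤ ∑ i, ‖T (b i)‖ := by
    refine T.opNorm_le_bound (Finset.sum_nonneg fun _ _ => norm_nonneg _) fun x => ?_
    conv_lhs => rw [← b.sum_repr' x, map_sum]
    rw [Finset.sum_mul]
    refine (norm_sum_le _ _).trans (Finset.sum_le_sum fun i _ => ?_)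
    rw [map_smul, norm_smul, mul_comm]
    gcongr
    simpa using norm_inner_le_norm (𝕜 := ℝ) (b i) x
  simpa only [ofReal_norm, ENNReal.ofReal_sum_of_nonneg fun i _ => norm_nonneg (T (b i))] using
    ENNReal.ofReal_le_ofReal h_norm

variable [MeasurableSpace E] [BorelSpace E] [FiniteDimensional ℝ E] {μ : Measure E}
  [μ.IsAddHaarMeasure] {φ : E → ℝ} {r : ℝ}

lemma IsMollifier.exists_enorm_sub_le_sum_hardyLittlewoodMax (hφ : IsMollifier μ φ)
    (b : OrthonormalBasis ι ℝ E) (hr : 0 < r) (hr₁ : r ≤ 1) (hnr : finrank ℝ E * (1 - r) < r) :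
    ∃ C ≠ ⊤, ∀ {f : E → ℝ} {m : ι → E → ℝ≥0∞}, LocallyIntegrable f μ →
      (∀ i k y, ‖mollifiedDeriv μ φ f (b i) (dyadicScale k) y‖ₑ ≤ m i y) →
      ∃ Z, μ Z = 0 ∧ ∀ x ∉ Z, ∀ y ∉ Z, ‖x - y‖ ≤ 1 → ‖f x - f y‖ₑ ≤
        C * (‖x - y‖ₑ * (∑ i, hardyLittlewoodMax μ (fun z => m i z ^ r) x ^ (1 / r) +
          ∑ i, hardyLittlewoodMax μ (fun z => m i z ^ r) y ^ (1 / r))) := by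
  obtain ⟨C, hC, h_max⟩ := IsDyadicMollification.exists_enorm_le_hardyLittlewoodMax hφ hr hr₁ hnr
  set L := ∫⁻ z, ‖φ z‖ₑ ∂μ
  have hL : L ≠ ⊤ := hφ.lintegral_enorm_ne_top
  refine ⟨(8 * L + 1) * C, by finiteness, fun {f m} hf hm =>
    ⟨_, ae_iff.1 (hφ.ae_tendsto_dyadicMollify hf), fun x hx y hy hxy => ?_⟩⟩
  set G := fun x => ∑ i, hardyLittlewoodMax μ (fun z => m i z ^ r) x ^ (1 / r)
  have h_fderiv (x : E) (k : ℕ) (z : E) (hz : ‖z - x‖ ≤ 4 * dyadicScale k) :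
      ‖fderiv ℝ (dyadicMollify μ φ f k) z‖ₑ ≤ C * G x := by
    refine (enorm_clm_le_sum_enorm_apply_orthonormalBasis b _).trans ?_
    rw [Finset.mul_sum]
    refine Finset.sum_le_sum fun i _ => ?_
    rw [hφ.fderiv_dyadicMollify_apply hf]
    exact h_max (hφ.isDyadicMollification_mollifiedDeriv hf (b i)) (hm i) hz
  refine (hφ.enorm_sub_le_of_enorm_fderiv_dyadicMollify_le hf h_fderiv (not_not.1 hx)
    (not_not.1 hy) hxy).trans_eq ?_
  ring

end OrthonormalDerivatives

section Quasinorm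

lemma rpow_sum_le_card_rpow_mul_sum_rpow {ι : Type*} [Fintype ι] (a : ι → ℝ≥0∞) {p : ℝ}
    (hp : 0 < p) : (∑ i, a i) ^ p ≤ (Fintype.card ι : ℝ≥0∞) ^ p * ∑ i, a i ^ p := by
  cases isEmpty_or_nonempty ι
  · simp [hp]
  obtain ⟨i₀, h_max⟩ := Finite.exists_max a
  calc (∑ i, a i) ^ p ≤ (Fintype.card ι * a i₀) ^ p := by
        gcongr
        simpa using Finset.sum_le_card_nsmul Finset.univ a (a i₀) fun i _ => h_max i
    _ ≤ (Fintype.card ι : ℝ≥0∞) ^ p * ∑ i, a i ^ p := by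
        rw [ENNReal.mul_rpow_of_nonneg _ _ hp.le]
        gcongr
        exact Finset.single_le_sum (f := fun i => a i ^ p) (fun _ _ => zero_le)
          (Finset.mem_univ i₀)

variable {α : Type*} [MeasurableSpace α] {μ : Measure α} {p : ℝ}

lemma lintegral_const_mul_rpow_quasinorm (hp : 0 < p) {C : ℝ≥0∞} (hC : C ≠ ⊤) (h : α → ℝ≥0∞) :
    (∫⁻ x, (C * h x) ^ p ∂μ) ^ (1 / p) = C * (∫⁻ x, h x ^ p ∂μ) ^ (1 / p) := by
  simp_rw [ENNReal.mul_rpow_of_nonneg _ _ hp.le]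
  rw [lintegral_const_mul' _ _ (rpow_ne_top_of_nonneg hp.le hC),
    ENNReal.mul_rpow_of_nonneg _ _ (by positivity), ← ENNReal.rpow_mul, mul_one_div_cancel hp.ne',
    ENNReal.rpow_one]

lemma lintegral_sum_rpow_quasinorm_le {ι : Type*} [Fintype ι] (hp : 0 < p) {h : ι → α → ℝ≥0∞}
    (hh : ∀ i, Measurable (h i)) :
    (∫⁻ x, (∑ i, h i x) ^ p ∂μ) ^ (1 / p) ≤
      Fintype.card ι * (Fintype.card ι : ℝ≥0∞) ^ (1 / p) *
        ∑ i, (∫⁻ x, h i x ^ p ∂μ) ^ (1 / p) := by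
  have hp' : 0 < 1 / p := by positivity
  calc (∫⁻ x, (∑ i, h i x) ^ p ∂μ) ^ (1 / p)
      ≤ (∫⁻ x, (Fintype.card ι : ℝ≥0∞) ^ p * ∑ i, h i x ^ p ∂μ) ^ (1 / p) := by
        gcongr with x
        exact rpow_sum_le_card_rpow_mul_sum_rpow _ hp
    _ = Fintype.card ι * (∑ i, ∫⁻ x, h i x ^ p ∂μ) ^ (1 / p) := by
        rw [lintegral_const_mul' _ _ (by finiteness),
          lintegral_finsetSum _ fun i _ => (hh i).pow_const p,
          ENNReal.mul_rpow_of_nonneg _ _ hp'.le, ← ENNReal.rpow_mul, mul_one_div_cancel hp.ne',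
          ENNReal.rpow_one]
    _ ≤ _ := by
        rw [mul_assoc]
        gcongr
        exact rpow_sum_le_card_rpow_mul_sum_rpow _ hp'

lemma ae_ne_top_of_lintegral_rpow_quasinorm_ne_top (hp : 0 < p) {h : α → ℝ≥0∞} (hh : Measurable h)
    (h_fin : (∫⁻ x, h x ^ p ∂μ) ^ (1 / p) ≠ ⊤) : ∀ᵐ x ∂μ, h x ≠ ⊤ := by
  have h_int : ∫⁻ x, h x ^ p ∂μ ≠ ⊤ := fun h_top => h_fin (by simp [h_top, hp])
  filter_upwards [ae_lt_top (hh.pow_const p) h_int] with x hx h_top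
  simp [h_top, hp] at hx

end Quasinorm

section FiniteInfimum

variable {ι : Type*} [Fintype ι] {S : Set ℝ≥0∞} {a : ι → ℝ≥0∞} {C K : ℝ≥0∞}

lemma inv_mul_sum_le_sInf (hC₀ : C ≠ 0) (hC : C ≠ ⊤) (hKC : Fintype.card ι * K ≤ C)
    (h_le : ∀ r ∈ S, ∀ i, a i ≤ K * r) : C⁻¹ * ∑ i, a i ≤ sInf S := by
  refine le_sInf fun r hr => (ENNReal.inv_mul_le_iff hC₀ hC).2 ?_
  calc ∑ i, a i ≤ ∑ _i : ι, K * r := Finset.sum_le_sum fun i _ => h_le r hr i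
    _ = Fintype.card ι * K * r := by simp [mul_assoc]
    _ ≤ C * r := by gcongr

lemma sInf_le_mul_sum (hC₀ : C ≠ 0) (hKC : K ≤ C)
    (h_exists : (∀ i, a i ≠ ⊤) → ∃ r ∈ S, r ≤ K * ∑ i, a i) : sInf S ≤ C * ∑ i, a i := by
  by_cases h_fin : ∀ i, a i ≠ ⊤
  · obtain ⟨r, hr, hr_le⟩ := h_exists h_fin
    exact (sInf_le hr).trans (hr_le.trans (by gcongr))
  · push Not at h_fin
    obtain ⟨i, hi⟩ := h_fin
    rw [ENNReal.sum_eq_top.2 ⟨i, Finset.mem_univ i, hi⟩, ENNReal.mul_top hC₀]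
    exact le_top

end FiniteInfimum

section Euclidean

variable {n : ℕ} {p : ℝ} {ψ f : EuclideanSpace ℝ (Fin n) → ℝ}

lemma exists_exponent_lt_min (hp : (n : ℝ) / (n + 1) < p) :
    ∃ q : ℝ, 0 < q ∧ q < 1 ∧ q < p ∧ n * (1 - q) < q := by
  have h_one : (n : ℝ) / (n + 1) < 1 := (div_lt_one (by positivity)).2 (by linarith)
  obtain ⟨q, hq, hq_min⟩ := exists_between (lt_min hp h_one)
  refine ⟨q, lt_of_le_of_lt (by positivity) hq, hq_min.trans_le (min_le_right _ _),
    hq_min.trans_le (min_le_left _ _), ?_⟩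
  rw [div_lt_iff₀ (by positivity)] at hq
  linarith

lemma truncSmoothMax_eq_iSup_enorm_mollifiedDeriv (ψ f : EuclideanSpace ℝ (Fin n) → ℝ) (j : Fin n)
    (x : EuclideanSpace ℝ (Fin n)) :
    truncSmoothMax n ψ f j x = ⨆ t : {s : ℝ // 0 < s ∧ s ≤ 1},
      ‖mollifiedDeriv volume ψ f (EuclideanSpace.single j 1) t x‖ₑ := by
  refine iSup_congr fun ⟨t, ht, _⟩ => ?_
  have h_eq : mollifiedDeriv volume ψ f (EuclideanSpace.single j 1) t x = t⁻¹ ^ (n + 1) *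
      ∫ y, f y * fderiv ℝ ψ (t⁻¹ • (x - y)) (EuclideanSpace.single j 1) := by
    rw [mollifiedDeriv, convolution_mul_swap, ← integral_const_mul]
    simp only [fderiv_dilate_apply, finrank_euclideanSpace_fin, mul_assoc, mul_comm (f _)]
  rw [h_eq, ← ofReal_norm, norm_mul, Real.norm_of_nonneg (by positivity), Real.norm_eq_abs]

lemma measurable_truncSmoothMax (hψ : ContDiff ℝ 1 ψ) (hψ_supp : tsupport ψ ⊆ ball 0 1)
    (hf : LocallyIntegrable f) (j : Fin n) : Measurable (truncSmoothMax n ψ f j) := by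
  simp only [funext (truncSmoothMax_eq_iSup_enorm_mollifiedDeriv ψ f j)]
  exact (lowerSemicontinuous_iSup fun t =>
    (continuous_mollifiedDeriv hψ hψ_supp hf t.2.1).enorm.lowerSemicontinuous).measurable

lemma lpNorm_toReal_le (hp : 0 ≤ p) (G : EuclideanSpace ℝ (Fin n) → ℝ≥0∞)
    (μ : Measure (EuclideanSpace ℝ (Fin n))) :
    _root_.lpNorm n p (fun x => (G x).toReal) μ ≤ (∫⁻ x, G x ^ p ∂μ) ^ (1 / p) := by
  rw [_root_.lpNorm]
  gcongr with x
  rw [abs_of_nonneg toReal_nonneg]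
  exact ofReal_toReal_le

lemma isLocalHajlaszGradient_toReal {G : EuclideanSpace ℝ (Fin n) → ℝ≥0∞} (hG : Measurable G)
    (hG_fin : ∀ᵐ x, G x ≠ ⊤) {Z : Set (EuclideanSpace ℝ (Fin n))} (hZ : volume Z = 0)
    (h_le : ∀ x ∉ Z, ∀ y ∉ Z, ‖x - y‖ ≤ 1 → ‖f x - f y‖ₑ ≤ ‖x - y‖ₑ * (G x + G y)) :
    IsLocalHajlaszGradient n f fun x => (G x).toReal := by
  refine ⟨hG.ennreal_toReal, fun x => toReal_nonneg, Z ∪ {x | ¬ G x ≠ ⊤},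
    measure_union_null hZ (ae_iff.1 hG_fin), fun x hx y hy hxy => ?_⟩
  simp only [mem_union, mem_ofPred_eq, not_or, not_not] at hx hy
  have h_real := ENNReal.toReal_mono
    (mul_ne_top enorm_ne_top (add_ne_top.2 ⟨hx.2, hy.2⟩)) (h_le x hx.1 y hy.1 hxy)
  rwa [ENNReal.toReal_mul, ENNReal.toReal_add hx.2 hy.2, toReal_enorm, toReal_enorm,
    Real.norm_eq_abs] at h_real

lemma exists_truncSmoothMax_quasinorm_le (hp : (n : ℝ) / (n + 1) < p) (hψ : ContDiff ℝ 1 ψ)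
    (hψ_supp : tsupport ψ ⊆ ball 0 1) :
    ∃ K ≠ ⊤, ∀ {f g : EuclideanSpace ℝ (Fin n) → ℝ}, LocallyIntegrable f →
      IsLocalHajlaszGradient n f g → ∀ j,
        (∫⁻ x, truncSmoothMax n ψ f j x ^ p) ^ (1 / p) ≤ K * _root_.lpNorm n p g volume := by
  obtain ⟨q, hq, hq₁, hqp, hnq⟩ := exists_exponent_lt_min hp
  have hp₀ : 0 < p := hq.trans hqp
  obtain ⟨C, hC, h_point⟩ := exists_enorm_mollifiedDeriv_le_hardyLittlewoodMax volume hq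
    (by rwa [finrank_euclideanSpace_fin]) hq₁ hψ hψ_supp
  obtain ⟨Q, hQ, h_max⟩ := exists_lintegral_hardyLittlewoodMax_rpow_quasinorm_le
    (volume : Measure (EuclideanSpace ℝ (Fin n))) hq hqp
  refine ⟨C * Q, mul_ne_top hC hQ, fun {f g} hf ⟨hg, hg₀, Z, hZ, h_hajlasz⟩ j => ?_⟩
  have h_norm : _root_.lpNorm n p g volume = (∫⁻ x, ENNReal.ofReal (g x) ^ p) ^ (1 / p) := by
    simp only [_root_.lpNorm, abs_of_nonneg (hg₀ _)]
  set M := fun x => hardyLittlewoodMax volume (fun y => ENNReal.ofReal (g y) ^ q) x ^ (1 / q)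
  have h_le (x : EuclideanSpace ℝ (Fin n)) : truncSmoothMax n ψ f j x ≤ C * M x := by
    rw [truncSmoothMax_eq_iSup_enorm_mollifiedDeriv]
    exact iSup_le fun t => h_point hf hZ hg₀ h_hajlasz t.2.1 t.2.2 (by simp) x
  calc (∫⁻ x, truncSmoothMax n ψ f j x ^ p) ^ (1 / p)
      ≤ (∫⁻ x, (C * M x) ^ p) ^ (1 / p) := by
        gcongr with x
        exact h_le x
    _ = C * (∫⁻ x, M x ^ p) ^ (1 / p) := lintegral_const_mul_rpow_quasinorm hp₀ hC M
    _ ≤ C * (Q * (∫⁻ x, ENNReal.ofReal (g x) ^ p) ^ (1 / p)) := by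
        gcongr
        exact h_max _ hg.ennreal_ofReal
    _ = C * Q * _root_.lpNorm n p g volume := by rw [h_norm, mul_assoc]

lemma exists_isLocalHajlaszGradient_lpNorm_le (hp : (n : ℝ) / (n + 1) < p)
    (hψ : IsMollifier volume ψ) :
    ∃ K ≠ ⊤, ∀ {f : EuclideanSpace ℝ (Fin n) → ℝ}, LocallyIntegrable f →
      (∀ j, (∫⁻ x, truncSmoothMax n ψ f j x ^ p) ^ (1 / p) ≠ ⊤) →
      ∃ g, IsLocalHajlaszGradient n f g ∧ _root_.lpNorm n p g volume ≤
        K * ∑ j, (∫⁻ x, truncSmoothMax n ψ f j x ^ p) ^ (1 / p) := by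
  obtain ⟨q, hq, hq₁, hqp, hnq⟩ := exists_exponent_lt_min hp
  have hp₀ : 0 < p := hq.trans hqp
  obtain ⟨C, hC, h_point⟩ := hψ.exists_enorm_sub_le_sum_hardyLittlewoodMax
    (EuclideanSpace.basisFun (Fin n) ℝ) hq hq₁.le (by rwa [finrank_euclideanSpace_fin])
  obtain ⟨Q, hQ, h_max⟩ := exists_lintegral_hardyLittlewoodMax_rpow_quasinorm_le
    (volume : Measure (EuclideanSpace ℝ (Fin n))) hq hqp
  set N : ℝ≥0∞ := Fintype.card (Fin n) * (Fintype.card (Fin n) : ℝ≥0∞) ^ (1 / p)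
  refine ⟨C * (N * Q), by finiteness, fun {f} hf h_fin => ?_⟩
  obtain ⟨Z, hZ, h_le⟩ := h_point (m := truncSmoothMax n ψ f) hf fun j k y => by
    rw [truncSmoothMax_eq_iSup_enorm_mollifiedDeriv, EuclideanSpace.basisFun_apply]
    exact le_iSup (fun t : {s : ℝ // 0 < s ∧ s ≤ 1} => ‖mollifiedDeriv volume ψ f _ t y‖ₑ)
      ⟨dyadicScale k, dyadicScale_pos k, dyadicScale_le_one k⟩
  set M : Fin n → EuclideanSpace ℝ (Fin n) → ℝ≥0∞ := fun j x =>
    hardyLittlewoodMax volume (fun y => truncSmoothMax n ψ f j y ^ q) x ^ (1 / q)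
  set G := fun x => C * ∑ j, M j x
  have hM (j : Fin n) : Measurable (M j) := (measurable_hardyLittlewoodMax _ _).pow_const _
  have hG : Measurable G := (Finset.measurable_sum _ fun j _ => hM j).const_mul C
  have hG_norm : (∫⁻ x, G x ^ p) ^ (1 / p) ≤
      C * (N * Q) * ∑ j, (∫⁻ x, truncSmoothMax n ψ f j x ^ p) ^ (1 / p) := by
    rw [lintegral_const_mul_rpow_quasinorm hp₀ hC, mul_assoc, mul_assoc, Finset.mul_sum]
    gcongr
    refine (lintegral_sum_rpow_quasinorm_le hp₀ hM).trans ?_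
    gcongr with j
    exact h_max _ (measurable_truncSmoothMax hψ.contDiff hψ.tsupport_subset hf j)
  have hG_fin : (∫⁻ x, G x ^ p) ^ (1 / p) ≠ ⊤ :=
    ne_top_of_le_ne_top (mul_ne_top (by finiteness) (ENNReal.sum_ne_top.2 fun j _ => h_fin j))
      hG_norm
  refine ⟨fun x => (G x).toReal, isLocalHajlaszGradient_toReal hG
    (ae_ne_top_of_lintegral_rpow_quasinorm_ne_top hp₀ hG hG_fin) hZ fun x hx y hy hxy => ?_,
    (lpNorm_toReal_le hp₀.le G volume).trans hG_norm⟩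
  refine (h_le x hx y hy hxy).trans_eq ?_
  simp only [G, M]
  ring

end Euclidean

theorem local_hardy_sobolev_hajlasz_characterization_general
    (n : ℕ) (p : ℝ) (hp : (n : ℝ) / (n + 1) < p)
    (ψ : EuclideanSpace ℝ (Fin n) → ℝ) (hψ : ContDiff ℝ 1 ψ)
    (hψ_supp : tsupport ψ ⊆ ball 0 1) (hψ_int : ∫ x, ψ x = 1) :
    ∃ C : ℝ≥0∞, 1 ≤ C ∧ C ≠ ⊤ ∧
      ∀ f : EuclideanSpace ℝ (Fin n) → ℝ, LocallyIntegrable f →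
        (((∃ g, IsLocalHajlaszGradient n f g ∧ lpNorm n p g volume ≠ ⊤) ↔
            ∀ j : Fin n, (∫⁻ x, truncSmoothMax n ψ f j x ^ p) ^ (1 / p) ≠ ⊤) ∧
          C⁻¹ * ∑ j : Fin n, (∫⁻ x, truncSmoothMax n ψ f j x ^ p) ^ (1 / p) ≤
              sInf {r : ℝ≥0∞ | ∃ g, IsLocalHajlaszGradient n f g ∧
                r = lpNorm n p g volume} ∧
          sInf {r : ℝ≥0∞ | ∃ g, IsLocalHajlaszGradient n f g ∧
                r = lpNorm n p g volume} ≤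
              C * ∑ j : Fin n, (∫⁻ x, truncSmoothMax n ψ f j x ^ p) ^ (1 / p)) := by
  obtain ⟨K₁, hK₁, h_smoothMax_le⟩ := exists_truncSmoothMax_quasinorm_le hp hψ hψ_supp
  obtain ⟨K₂, hK₂, h_gradient⟩ :=
    exists_isLocalHajlaszGradient_lpNorm_le hp ⟨hψ, hψ_supp, hψ_int⟩
  set C : ℝ≥0∞ := 1 + Fintype.card (Fin n) * K₁ + K₂
  have hC_one : 1 ≤ C := le_add_right le_self_add
  have hC_zero : C ≠ 0 := (one_pos.trans_le hC_one).ne'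
  have hC_top : C ≠ ⊤ := by finiteness
  refine ⟨C, hC_one, hC_top, fun f hf => ⟨⟨?_, fun h_fin => ?_⟩, ?_, ?_⟩⟩
  · rintro ⟨g, hg, hg_fin⟩ j
    exact ne_top_of_le_ne_top (mul_ne_top hK₁ hg_fin) (h_smoothMax_le hf hg j)
  · obtain ⟨g, hg, hg_le⟩ := h_gradient hf h_fin
    exact ⟨g, hg, ne_top_of_le_ne_top
      (mul_ne_top hK₂ (ENNReal.sum_ne_top.2 fun j _ => h_fin j)) hg_le⟩
  · refine inv_mul_sum_le_sInf hC_zero hC_top (le_add_right le_add_self) ?_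
    rintro _ ⟨g, hg, rfl⟩ j
    exact h_smoothMax_le hf hg j
  · refine sInf_le_mul_sum hC_zero le_add_self fun h_fin => ?_
    obtain ⟨g, hg, hg_le⟩ := h_gradient hf h_fin
    exact ⟨_, ⟨g, hg, rfl⟩, hg_le⟩

/-- **Theorem 3.2.** Pointwise characterization of the local Hardy–Sobolev space
`ḣ^{1,p}(ℝⁿ)`, `n/(n+1) < p ≤ 1`: a locally integrable `f` has a local Hajlasz gradient
in `L^p` iff each truncated maximal function `m_ψ(D_j f)` lies in `L^p`, with
equivalence of (quasi)norms. -/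
theorem local_hardy_sobolev_hajlasz_characterization
    (n : ℕ) (hn : 1 ≤ n) (p : ℝ) (hp1 : (n : ℝ) / (n + 1) < p) (hp2 : p ≤ 1)
    (ψ : EuclideanSpace ℝ (Fin n) → ℝ) (hψ : ContDiff ℝ (⊤ : ℕ∞) ψ)
    (hψsupp : tsupport ψ ⊆ ball 0 1) (hψint : ∫ x, ψ x = 1) :
    ∃ C : ℝ≥0∞, 1 ≤ C ∧ C ≠ ⊤ ∧
      ∀ f : EuclideanSpace ℝ (Fin n) → ℝ, LocallyIntegrable f →
        (((∃ g, IsLocalHajlaszGradient n f g ∧ lpNorm n p g volume ≠ ⊤) ↔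
            ∀ j : Fin n, (∫⁻ x, truncSmoothMax n ψ f j x ^ p) ^ (1 / p) ≠ ⊤) ∧
          C⁻¹ * ∑ j : Fin n, (∫⁻ x, truncSmoothMax n ψ f j x ^ p) ^ (1 / p) ≤
              sInf {r : ℝ≥0∞ | ∃ g, IsLocalHajlaszGradient n f g ∧
                r = lpNorm n p g volume} ∧
          sInf {r : ℝ≥0∞ | ∃ g, IsLocalHajlaszGradient n f g ∧
                r = lpNorm n p g volume} ≤
              C * ∑ j : Fin n, (∫⁻ x, truncSmoothMax n ψ f j x ^ p) ^ (1 / p)) := by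
  exact local_hardy_sobolev_hajlasz_characterization_general n p hp1 ψ
    (hψ.of_le (by exact_mod_cast le_top)) hψsupp hψint
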